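/- There exists a constant C > 0 such that for every finite field F, writing q = |F| and G = PSL₂(F), the number of elements y ∈ G with the property that #{z ∈ G : {y, z} invariably generates G} ≥ (1/2 − C/q) · |G| is at least (1 − C·q^{−1/2}) · |G|. -/

import Mathlib

/-- `{x, y}` invariably generates `G`: for all `g, h`, the conjugates
`g * x * g⁻¹` and `h * y * h⁻¹` generate `G`. -/
def InvGen {G : Type*} [Group G] (x y : G) : Prop :=
  ∀ g h : G, Subgroup.closure {g * x * g⁻¹, h * y * h⁻¹} = ⊤

/-- The projective special linear group `PSL₂(F) = SL₂(F) / Z(SL₂(F))`. -/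
abbrev PSL2 (F : Type*) [Field F] :=
  Matrix.SpecialLinearGroup (Fin 2) F ⧸
    Subgroup.center (Matrix.SpecialLinearGroup (Fin 2) F)

/-!
Commuting is transitive on the noncentral elements of `SL₂(F)`, so for a subgroup `H` containing
the center `Z` the centralizers in `H` of noncentral elements partition `H \ Z`. The conjugates of
such a centralizer `C` with normalizer `N` cover a proportion `(1 - 1 / d) / e` of `H`, where
`d = [C : Z]` and `e = [N : C]`. Suppose that `H` contains a split and a nonsplit semisimple
element, both of order at least `4` modulo `Z`. Then both have `d ≥ 4`, which forces `e = 2`, and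
what is left has room only for one class of unipotent elements. If `q` is the number of unipotent
upper triangular elements of `H`, after conjugation, the class equation leaves for the two tori
only `d = q - 1` and `d = q + 1`, or half of these, so the squares of the traces of both elements
lie in the subfield with `q` elements. If one of these squares generates `F`, then `H` contains all
transvections and `H = SL₂(F)`. Being split or not depends only on the trace, all but `O(√|F|)`
traces have a square generating `F`, and about half of the traces are split.
-/

open Subgroup Matrix
open scoped MatrixGroups

section Groups

variable {G : Type*} [Group G]

lemma conj_mem_center_iff (x g : G) : x * g * x⁻¹ ∈ center G ↔ g ∈ center G :=
  ⟨fun h ↦ by simpa [mul_assoc] using (inferInstance : (center G).Normal).conj_mem _ h x⁻¹,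
    fun h ↦ (inferInstance : (center G).Normal).conj_mem _ h x⟩

lemma commute_inv_mul_of_conj_eq {u v y : G} (h : u * y * u⁻¹ = v * y * v⁻¹) :
    Commute (v⁻¹ * u) y :=
  calc v⁻¹ * u * y = v⁻¹ * (u * y * u⁻¹) * u := by group
    _ = y * (v⁻¹ * u) := by rw [h]; group

lemma card_mul_relIndex {K L : Subgroup G} (h : K ≤ L) :
    Nat.card K * K.relIndex L = Nat.card L := by
  simpa only [relIndex_bot_left] using relIndex_mul_relIndex ⊥ K L bot_le h

lemma card_add_one_le_relIndex [Finite G] {U B H : Subgroup G} (hUB : U ≤ B) (hUH : U ≤ H)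
    {y : G} (hyH : y ∈ H) (hyB : y ∉ B) (h : ∀ u ∈ U, y⁻¹ * u * y ∈ B → u = 1) :
    Nat.card U + 1 ≤ B.relIndex H := by
  let coset (u : U) : H ⧸ B.subgroupOf H := (⟨u * y, mul_mem (hUH u.2) hyH⟩ : H)
  let f : Option U → H ⧸ B.subgroupOf H := fun o ↦ o.elim ((1 : H) : H ⧸ B.subgroupOf H) coset
  have coset_ne (u : U) : ((1 : H) : H ⧸ B.subgroupOf H) ≠ coset u := by
    intro hu
    rw [QuotientGroup.eq, mem_subgroupOf] at hu
    exact hyB ((mul_mem_cancel_left (hUB u.2)).1 (by simpa using hu))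
  have coset_inj : coset.Injective := by
    intro u v huv
    rw [QuotientGroup.eq, mem_subgroupOf] at huv
    have := h _ (mul_mem (inv_mem u.2) v.2) (by simpa [mul_assoc] using huv)
    exact Subtype.ext (inv_mul_eq_one.1 this)
  have hf : f.Injective := by
    rintro (_ | u) (_ | v) huv
    · rfl
    · exact (coset_ne v huv).elim
    · exact (coset_ne u huv.symm).elim
    · exact congrArg some (coset_inj huv)
  rw [← Finite.card_option]
  exact Nat.card_le_card_of_injective f hf

lemma relIndex_centralizer_add_one_le [Finite G] {A U : Subgroup G} (hA : A ≤ normalizer U)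
    {u : G} (hu : u ∈ U) (hu1 : u ≠ 1) : (centralizer {u}).relIndex A + 1 ≤ Nat.card U := by
  let Q := A ⧸ (centralizer {u}).subgroupOf A
  let conj (c : Q) : U :=
    ⟨c.out * u * (c.out : G)⁻¹, (mem_normalizer_iff.1 (hA c.out.2) u).1 hu⟩
  let f : Option Q → U := fun o ↦ o.elim 1 conj
  have conj_ne (c : Q) : (1 : U) ≠ conj c := by
    intro h
    exact hu1 (conj_eq_one_iff.1 (Subtype.ext_iff.1 h).symm)
  have conj_inj : conj.Injective := by
    intro c d hcd
    have h : (c.out : G) * u * (c.out : G)⁻¹ = d.out * u * (d.out : G)⁻¹ := Subtype.ext_iff.1 hcd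
    rw [← c.out_eq', ← d.out_eq', QuotientGroup.eq, mem_subgroupOf, mem_centralizer_singleton_iff]
    calc (c.out : G)⁻¹ * d.out * u = (c.out : G)⁻¹ * (d.out * u * (d.out : G)⁻¹) * d.out := by group
      _ = u * ((c.out : G)⁻¹ * d.out) := by rw [← h]; group
  have hf : f.Injective := by
    rintro (_ | c) (_ | d) hcd
    · rfl
    · exact (conj_ne d hcd).elim
    · exact (conj_ne c hcd.symm).elim
    · exact congrArg some (conj_inj hcd)
  rw [relIndex, index, ← Finite.card_option]
  exact Nat.card_le_card_of_injective f hf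

/-- Commuting is a transitive relation on the noncentral elements of `G`, as in `SL(2, F)`. -/
class IsCommuteTransitive (G : Type*) [Group G] : Prop where
  commute_of_commute {x y z : G} : x ∉ center G → Commute x y → Commute x z → Commute y z

/-- The centralizer of `g` in the subgroup `H`; `g` itself need not lie in `H`. -/
def centralizerIn (H : Subgroup G) (g : G) : Subgroup G :=
  H ⊓ centralizer {g}

/-- The elements of `H` that normalize the centralizer of `g`. -/
def normalizerIn (H : Subgroup G) (g : G) : Subgroup G :=
  H ⊓ normalizer (centralizer {g})

/-- The noncentral elements of `H` having an `H`-conjugate that commutes with `g`. When commuting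
is transitive, these classes partition the noncentral elements of `H`. -/
def centralizerClass (H : Subgroup G) (g : G) : Set G :=
  {k | k ∈ H ∧ k ∉ center G ∧ ∃ x ∈ H, Commute (x * k * x⁻¹) g}

variable {H : Subgroup G} {g k : G}

lemma mem_centralizerIn_iff : k ∈ centralizerIn H g ↔ k ∈ H ∧ Commute k g := by
  rw [centralizerIn, mem_inf, mem_centralizer_singleton_iff]; rfl

lemma center_le_centralizerIn (hH : center G ≤ H) : center G ≤ centralizerIn H g :=
  le_inf hH (center_le_centralizer _)

lemma centralizerIn_le_normalizerIn : centralizerIn H g ≤ normalizerIn H g :=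
  inf_le_inf_left H le_normalizer

lemma centralizerClass_subset : centralizerClass H g ⊆ H \ center G :=
  fun _ hk ↦ ⟨hk.1, hk.2.1⟩

lemma commute_conj_of_mem_normalizerIn {n : G} (hn : n ∈ normalizerIn H g) (hk : Commute k g) :
    Commute (n * k * n⁻¹) g :=
  mem_centralizer_singleton_iff.1
    ((mem_normalizer_iff.1 hn.2 k).1 (mem_centralizer_singleton_iff.2 hk))

variable [IsCommuteTransitive G]

lemma mem_normalizerIn_iff (hgZ : g ∉ center G) {x : G} :
    x ∈ normalizerIn H g ↔ x ∈ H ∧ Commute (x * g * x⁻¹) g := by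
  have conj_commute {y c : G} (hy : Commute (y * g * y⁻¹) g) (hc : Commute c g) :
      Commute (y * c * y⁻¹) g :=
    IsCommuteTransitive.commute_of_commute (mt (conj_mem_center_iff y g).1 hgZ)
      ((Commute.conj_iff y).2 hc.symm) hy
  rw [normalizerIn, mem_inf, and_congr_right_iff]
  refine fun _ ↦ ⟨fun hx ↦ ?_, fun hx ↦ mem_normalizer_iff.2 fun c ↦ ?_⟩
  · exact mem_centralizer_singleton_iff.1
      ((mem_normalizer_iff.1 hx g).1 (mem_centralizer_singleton_iff.2 rfl))
  · have hx' : Commute (x⁻¹ * g * x⁻¹⁻¹) g := by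
      rw [← Commute.conj_iff x]
      simpa [mul_assoc] using hx.symm
    simp only [mem_centralizer_singleton_iff]
    exact ⟨conj_commute hx, fun h ↦ by simpa [mul_assoc] using! conj_commute hx' h⟩

lemma disjoint_centralizerClass (hk : k ∈ H) (hkZ : k ∉ center G)
    (h : k ∉ centralizerClass H g) : Disjoint (centralizerClass H g) (centralizerClass H k) := by
  refine Set.disjoint_left.2 fun z hzg hzk ↦ h ?_
  obtain ⟨-, hzZ, x, hx, hxz⟩ := hzg
  obtain ⟨-, -, y, hy, hyz⟩ := hzk
  refine ⟨hk, hkZ, x * y⁻¹, mul_mem hx (inv_mem hy), ?_⟩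
  refine IsCommuteTransitive.commute_of_commute (mt (conj_mem_center_iff x z).1 hzZ) ?_ hxz
  have := (Commute.conj_iff (x * y⁻¹)).2 hyz
  simpa [mul_assoc] using this

lemma mul_inv_mem_normalizerIn (hgZ : g ∉ center G) (hkZ : k ∉ center G) {x y : G} (hx : x ∈ H)
    (hy : y ∈ H) (hxk : Commute (x * k * x⁻¹) g) (hyk : Commute (y * k * y⁻¹) g) :
    x * y⁻¹ ∈ normalizerIn H g := by
  refine (mem_normalizerIn_iff hgZ).2 ⟨mul_mem hx (inv_mem hy), ?_⟩
  refine IsCommuteTransitive.commute_of_commute (mt (conj_mem_center_iff x k).1 hkZ) ?_ hxk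
  simpa [mul_assoc] using (Commute.conj_iff (x * y⁻¹)).2 hyk

/-- A choice, for each `k` in the class of `g`, of an element of `H` conjugating `k` into the
centralizer of `g` identifies `H × (centralizer ∖ center)` with `class × normalizer`. -/
lemma ncard_centralizerClass_mul_card_normalizerIn [Finite G] (hH : center G ≤ H)
    (hgZ : g ∉ center G) :
    (centralizerClass H g).ncard * Nat.card (normalizerIn H g) + Nat.card (center G) * Nat.card H
      = Nat.card (centralizerIn H g) * Nat.card H := by
  choose! c hcH hc using fun k (hk : k ∈ centralizerClass H g) ↦ hk.2.2
  let A : Set G := centralizerIn H g \ center G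
  have inv_conj_mem (p : H × A) : (p.1 : G)⁻¹ * p.2 * p.1 ∈ centralizerClass H g := by
    have ha := mem_centralizerIn_iff.1 p.2.2.1
    refine ⟨mul_mem (mul_mem (inv_mem p.1.2) ha.1) p.1.2, fun h ↦ p.2.2.2 ?_, p.1, p.1.2, ?_⟩
    · simpa [mul_assoc] using (conj_mem_center_iff (p.1 : G) _).2 h
    · simpa [mul_assoc] using ha.2
  have conj_mem (p : centralizerClass H g × normalizerIn H g) :
      p.2 * c p.1 * p.1 * (p.2 * c p.1)⁻¹ ∈ A := by
    have hx : (p.2 * c p.1 : G) ∈ H := mul_mem p.2.2.1 (hcH _ p.1.2)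
    refine ⟨mem_centralizerIn_iff.2 ⟨mul_mem (mul_mem hx p.1.2.1) (inv_mem hx), ?_⟩,
      mt (conj_mem_center_iff _ _).1 p.1.2.2.1⟩
    simpa [mul_assoc] using commute_conj_of_mem_normalizerIn p.2.2 (hc _ p.1.2)
  let e : H × A ≃ centralizerClass H g × normalizerIn H g :=
  { toFun := fun p ↦ ⟨⟨_, inv_conj_mem p⟩, ⟨p.1 * (c ((p.1 : G)⁻¹ * p.2 * p.1))⁻¹,
      mul_inv_mem_normalizerIn hgZ (inv_conj_mem p).2.1 p.1.2 (hcH _ (inv_conj_mem p))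
        (by simpa [mul_assoc] using (mem_centralizerIn_iff.1 p.2.2.1).2)
        (hc _ (inv_conj_mem p))⟩⟩
    invFun := fun p ↦ ⟨⟨p.2 * c p.1, mul_mem p.2.2.1 (hcH _ p.1.2)⟩, ⟨_, conj_mem p⟩⟩
    left_inv := fun p ↦ by ext <;> simp [mul_assoc]
    right_inv := fun p ↦ by ext <;> simp [mul_assoc] }
  have hA : Nat.card A + Nat.card (center G) = Nat.card (centralizerIn H g) :=
    Set.ncard_sdiff_add_ncard_of_subset (center_le_centralizerIn hH)
  have hcard := Nat.card_congr e
  rw [Nat.card_prod, Nat.card_prod, Nat.card_coe_set_eq (centralizerClass H g)] at hcard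
  rw [← hcard, ← hA]
  ring

/-- In other words, the class of `g` has density `(1 - 1 / d) / e` in `H`, where `d` is the index of
the center in the centralizer of `g` and `e` that of the centralizer in its normalizer. -/
lemma ncard_centralizerClass_mul_relIndex [Finite G] (hH : center G ≤ H) (hgZ : g ∉ center G) :
    (centralizerClass H g).ncard * ((centralizerIn H g).relIndex (normalizerIn H g) *
      (center G).relIndex (centralizerIn H g)) + Nat.card H
      = (center G).relIndex (centralizerIn H g) * Nat.card H := by
  have hN := card_mul_relIndex (centralizerIn_le_normalizerIn (H := H) (g := g))
  have hC := card_mul_relIndex (center_le_centralizerIn (g := g) hH)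
  have h := ncard_centralizerClass_mul_card_normalizerIn hH hgZ
  rw [← hN, ← hC] at h
  refine Nat.eq_of_mul_eq_mul_left (Nat.card_pos (α := center G)) ?_
  linear_combination h

lemma ncard_centralizerClass_add_card_center_mul_relIndex_le [Finite G] (hH : center G ≤ H)
    (hgZ : g ∉ center G) :
    ((centralizerClass H g).ncard + Nat.card (center G)) *
      (centralizerIn H g).relIndex (normalizerIn H g) ≤ Nat.card H := by
  have hN := card_mul_relIndex (centralizerIn_le_normalizerIn (H := H) (g := g))
  have hNH : Nat.card (normalizerIn H g) ≤ Nat.card H := Subgroup.card_le_of_le inf_le_left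
  have h := ncard_centralizerClass_mul_card_normalizerIn hH hgZ
  refine le_of_mul_le_mul_left ?_ (Nat.card_pos (α := centralizerIn H g))
  rw [← hN] at h hNH
  nlinarith

end Groups

section SL2

section CommRing

variable {R : Type*} [CommRing R]

lemma trace_coe_conj (x g : SL(2, R)) : (x * g * x⁻¹).1.trace = g.1.trace := by
  rw [Matrix.SpecialLinearGroup.coe_mul, trace_mul_comm, ← Matrix.SpecialLinearGroup.coe_mul,
    inv_mul_cancel_left]

lemma trace_coe_inv (g : SL(2, R)) : g⁻¹.1.trace = g.1.trace := by
  simp [Matrix.SpecialLinearGroup.coe_inv, adjugate_fin_two, trace_fin_two, add_comm]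

lemma mul_self_eq_trace_smul_sub_det (M : Matrix (Fin 2) (Fin 2) R) :
    M * M = M.trace • M - M.det • (1 : Matrix (Fin 2) (Fin 2) R) := by
  ext i j
  fin_cases i <;> fin_cases j <;>
    simp [mul_apply, trace_fin_two, det_fin_two] <;> ring

lemma coe_inv_eq_trace_smul_sub (g : SL(2, R)) :
    g⁻¹.1 = g.1.trace • (1 : Matrix (Fin 2) (Fin 2) R) - g.1 := by
  ext i j
  fin_cases i <;> fin_cases j <;>
    simp [Matrix.SpecialLinearGroup.coe_inv, adjugate_fin_two, trace_fin_two]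

lemma trace_smul_one_eq_add_inv (g : SL(2, R)) :
    g.1.trace • (1 : Matrix (Fin 2) (Fin 2) R) = g.1 + g⁻¹.1 := by
  rw [coe_inv_eq_trace_smul_sub, add_sub_cancel]

lemma trace_pow_char_pow (p : ℕ) [Fact p.Prime] [CharP R p] (n : ℕ) (g : SL(2, R)) :
    (g ^ p ^ n).1.trace = g.1.trace ^ p ^ n := by
  have hcomm : Commute g.1 g⁻¹.1 := congrArg Subtype.val ((Commute.refl g).inv_right).eq
  have h := add_pow_char_pow_of_commute (p := p) (n := n) hcomm
  rw [← trace_smul_one_eq_add_inv, smul_pow, one_pow, ← Matrix.SpecialLinearGroup.coe_pow,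
    ← Matrix.SpecialLinearGroup.coe_pow, inv_pow, ← trace_smul_one_eq_add_inv] at h
  simpa using (congrFun₂ h 0 0).symm

lemma det_entries_eq_one (g : SL(2, R)) : g 0 0 * g 1 1 - g 0 1 * g 1 0 = 1 := by
  rw [← det_fin_two, g.det_coe]

lemma conj_apply_zero_one (x g : SL(2, R)) :
    (x * g * x⁻¹) 0 1 =
      x 0 0 ^ 2 * g 0 1 - x 0 0 * x 0 1 * (g 0 0 - g 1 1) - x 0 1 ^ 2 * g 1 0 := by
  simp only [Matrix.SpecialLinearGroup.coe_mul, Matrix.SpecialLinearGroup.coe_inv, adjugate_fin_two,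
    mul_apply, Fin.sum_univ_two, of_apply, cons_val', cons_val_zero, cons_val_one,
    cons_val_fin_one, mul_neg]
  ring

lemma conj_apply_one_zero (x g : SL(2, R)) :
    (x * g * x⁻¹) 1 0 =
      x 1 1 ^ 2 * g 1 0 + x 1 0 * x 1 1 * (g 0 0 - g 1 1) - x 1 0 ^ 2 * g 0 1 := by
  simp only [Matrix.SpecialLinearGroup.coe_mul, Matrix.SpecialLinearGroup.coe_inv, adjugate_fin_two,
    mul_apply, Fin.sum_univ_two, of_apply, cons_val', cons_val_zero, cons_val_one,
    cons_val_fin_one, mul_neg]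
  ring

lemma exists_coe_eq_of_det_eq_one {a b c d : R} (h : a * d - b * c = 1) :
    ∃ g : SL(2, R), g.1 = !![a, b; c, d] :=
  ⟨⟨!![a, b; c, d], by rwa [det_fin_two_of]⟩, rfl⟩

lemma coe_transvection_zero_one (b : R) :
    (Matrix.SpecialLinearGroup.transvection (zero_ne_one (α := Fin 2)) b).1 = !![1, b; 0, 1] := by
  ext i j
  fin_cases i <;> fin_cases j <;> simp [Matrix.SpecialLinearGroup.transvection_coe]

lemma coe_transvection_one_zero (b : R) :
    (Matrix.SpecialLinearGroup.transvection (one_ne_zero (α := Fin 2)) b).1 = !![1, 0; b, 1] := by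
  ext i j
  fin_cases i <;> fin_cases j <;> simp [Matrix.SpecialLinearGroup.transvection_coe]

end CommRing

variable {F : Type*} [Field F] {g k m x y : SL(2, F)}

lemma mem_center_iff_entries :
    g ∈ center SL(2, F) ↔ g 0 1 = 0 ∧ g 1 0 = 0 ∧ g 0 0 = g 1 1 := by
  rw [Matrix.SpecialLinearGroup.mem_center_iff]
  refine ⟨fun ⟨r, _, hr⟩ ↦ by simp [← hr], fun ⟨h01, h10, h⟩ ↦ ⟨g 0 0, ?_, ?_⟩⟩
  · have := det_entries_eq_one g
    rw [h01, ← h] at this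
    simpa [sq] using this
  · ext i j
    fin_cases i <;> fin_cases j <;> simp [h01, h10, h]

lemma notMem_center_of_trace_sq_ne_four (h : g.1.trace ^ 2 ≠ 4) : g ∉ center SL(2, F) := by
  intro hg
  obtain ⟨h01, h10, h00⟩ := mem_center_iff_entries.1 hg
  have := det_entries_eq_one g
  rw [trace_fin_two] at h
  grind

lemma trace_center_mul_sq {z : SL(2, F)} (hz : z ∈ center SL(2, F)) (g : SL(2, F)) :
    (z * g).1.trace ^ 2 = g.1.trace ^ 2 := by
  obtain ⟨r, hr, hz⟩ := Matrix.SpecialLinearGroup.mem_center_iff.1 hz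
  rw [Fintype.card_fin] at hr
  rw [Matrix.SpecialLinearGroup.coe_mul, ← hz, Matrix.scalar_apply, ← smul_eq_diagonal_mul,
    trace_smul, smul_eq_mul, mul_pow, hr, one_mul]

lemma exists_eq_smul_one_add_smul_of_commute (hx : x ∉ center SL(2, F)) (h : Commute x y) :
    ∃ α β : F, y.1 = α • (1 : Matrix (Fin 2) (Fin 2) F) + β • x.1 := by
  have entry (i j) : (x * y) i j = (y * x) i j := by rw [h.eq]
  have h00 := entry 0 0
  have h01 := entry 0 1
  have h10 := entry 1 0
  simp only [Matrix.SpecialLinearGroup.coe_mul, mul_apply, Fin.sum_univ_two] at h00 h01 h10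
  obtain ⟨β, hβ01, hβ10, hβ⟩ : ∃ β, y 0 1 = β * x 0 1 ∧ y 1 0 = β * x 1 0 ∧
      y 0 0 - y 1 1 = β * (x 0 0 - x 1 1) := by
    rw [mem_center_iff_entries] at hx
    by_cases hx01 : x 0 1 = 0
    · by_cases hx10 : x 1 0 = 0
      · have : x 0 0 - x 1 1 ≠ 0 := by grind
        exact ⟨(y 0 0 - y 1 1) / (x 0 0 - x 1 1), by grind, by grind, by field_simp⟩
      · exact ⟨y 1 0 / x 1 0, by grind, by field_simp, by grind⟩
    · exact ⟨y 0 1 / x 0 1, by field_simp, by grind, by grind⟩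
  refine ⟨y 0 0 - β * x 0 0, β, ?_⟩
  ext i j
  fin_cases i <;> fin_cases j <;> simp <;> grind

instance : IsCommuteTransitive SL(2, F) where
  commute_of_commute hx hxy hxz := by
    obtain ⟨α, β, hy⟩ := exists_eq_smul_one_add_smul_of_commute hx hxy
    obtain ⟨γ, δ, hz⟩ := exists_eq_smul_one_add_smul_of_commute hx hxz
    refine Subtype.ext ?_
    simp only [Matrix.SpecialLinearGroup.coe_mul, hy, hz]
    simp only [add_mul, mul_add, smul_mul_smul, one_mul, mul_one]
    simp only [mul_comm γ, mul_comm δ]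
    abel

lemma eq_or_eq_inv_of_commute (hg : g.1.trace ^ 2 ≠ 4) (h : Commute g k)
    (htr : k.1.trace = g.1.trace) : k = g ∨ k = g⁻¹ := by
  have hgk : g.1 * k.1 = k.1 * g.1 := congrArg Subtype.val h.eq
  have hg2 := mul_self_eq_trace_smul_sub_det g.1
  have hk2 := mul_self_eq_trace_smul_sub_det k.1
  rw [Matrix.SpecialLinearGroup.det_coe, one_smul] at hg2 hk2
  set A := k.1 - g.1 with hA
  set B := k.1 - g⁻¹.1 with hB
  have hAB : A * B = 0 := by
    rw [hA, hB, coe_inv_eq_trace_smul_sub, sub_mul, mul_sub, mul_sub, mul_sub, mul_sub, hg2, hk2,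
      htr, hgk]
    simp
  have hA2 : A * A = -A.det • (1 : Matrix (Fin 2) (Fin 2) F) := by
    rw [mul_self_eq_trace_smul_sub_det, hA, trace_sub, htr, sub_self, zero_smul, zero_sub, neg_smul]
  by_cases hdet : A.det = 0
  · have hdiff : IsUnit (A - B) := by
      have hdet4 : (A - B).det = 4 - g.1.trace ^ 2 := by
        have := det_entries_eq_one g
        rw [hA, hB, coe_inv_eq_trace_smul_sub, sub_sub_sub_cancel_left, det_fin_two, trace_fin_two]
        simp only [Matrix.sub_apply, Matrix.smul_apply, one_apply_eq, one_apply_ne, smul_eq_mul,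
          mul_one, mul_zero, ne_eq, zero_ne_one, one_ne_zero, not_false_eq_true]
        linear_combination 4 * this
      rw [isUnit_iff_isUnit_det, isUnit_iff_ne_zero, hdet4]
      exact sub_ne_zero.2 hg.symm
    left
    rw [hdet, neg_zero, zero_smul] at hA2
    have : A * (A - B) = 0 := by rw [mul_sub, hA2, hAB, sub_zero]
    exact Subtype.ext (sub_eq_zero.1 (hdiff.mul_left_eq_zero.1 this))
  · right
    have hAu : IsUnit A := (isUnit_iff_isUnit_det A).2 (isUnit_iff_ne_zero.2 hdet)
    exact Subtype.ext (sub_eq_zero.1 (hAu.mul_right_eq_zero.1 hAB))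

/-- `t` is the trace of a matrix of determinant one having an eigenvalue in `F`; the eigenvalues
are recorded as a pair with product one. -/
def IsSplitTrace (t : F) : Prop :=
  ∃ a b : F, a * b = 1 ∧ a + b = t

lemma isSplitTrace_of_sq_eq_four {t : F} (h : t ^ 2 = 4) : IsSplitTrace t := by
  have : (t - 2) * (t + 2) = 0 := by linear_combination h
  rcases mul_eq_zero.1 this with h | h
  · exact ⟨1, 1, by ring, by linear_combination -h⟩
  · exact ⟨-1, -1, by ring, by linear_combination -h⟩

lemma isSplitTrace_of_apply_one_zero_eq_zero (h : g 1 0 = 0) : IsSplitTrace g.1.trace := by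
  have := det_entries_eq_one g
  exact ⟨g 0 0, g 1 1, by simpa [h] using this, (trace_fin_two _).symm⟩

lemma IsSplitTrace.exists_conj_apply_one_zero_eq_zero (h : IsSplitTrace g.1.trace) :
    ∃ x : SL(2, F), (x * g * x⁻¹) 1 0 = 0 := by
  obtain ⟨a, b, hab, htr⟩ := h
  have hdet := det_entries_eq_one g
  rw [trace_fin_two] at htr
  by_cases hg : g 1 0 = 0
  · exact ⟨1, by simpa using hg⟩
  · obtain ⟨x, hx⟩ := exists_coe_eq_of_det_eq_one (R := F) (a := 0) (b := -(g 1 0)⁻¹) (c := g 1 0)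
      (d := a - g 0 0) (by field_simp; ring)
    refine ⟨x, ?_⟩
    rw [conj_apply_one_zero, hx]
    simp only [of_apply, cons_val', cons_val_one, cons_val_fin_one, cons_val_zero]
    grind

lemma IsSplitTrace.exists_conj_diagonal (h : IsSplitTrace g.1.trace) (h4 : g.1.trace ^ 2 ≠ 4) :
    ∃ x : SL(2, F), (x * g * x⁻¹) 0 1 = 0 ∧ (x * g * x⁻¹) 1 0 = 0 := by
  obtain ⟨x, hx⟩ := h.exists_conj_apply_one_zero_eq_zero
  rw [← trace_coe_conj x] at h4
  generalize hk : x * g * x⁻¹ = k at hx h4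
  have hdet := det_entries_eq_one k
  rw [trace_fin_two] at h4
  have hne : k 0 0 - k 1 1 ≠ 0 := by grind
  obtain ⟨u, hu⟩ := exists_coe_eq_of_det_eq_one (R := F) (a := 1)
    (b := k 0 1 / (k 0 0 - k 1 1)) (c := 0) (d := 1) (by ring)
  refine ⟨u * x, ?_⟩
  rw [show u * x * g * (u * x)⁻¹ = u * k * u⁻¹ by rw [← hk]; group]
  rw [conj_apply_zero_one, conj_apply_one_zero, hu]
  simp [hx, hne]

lemma IsSplitTrace.of_commute (hx : x ∉ center SL(2, F)) (h : IsSplitTrace x.1.trace)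
    (hxy : Commute x y) : IsSplitTrace y.1.trace := by
  obtain ⟨a, b, hab, htr⟩ := h
  obtain ⟨α, β, hy⟩ := exists_eq_smul_one_add_smul_of_commute hx hxy
  have hdx := det_entries_eq_one x
  have hdy := det_entries_eq_one y
  rw [trace_fin_two] at htr
  refine ⟨α + β * a, α + β * b, ?_, ?_⟩
  · simp only [hy, Matrix.add_apply, Matrix.smul_apply, one_apply_eq, one_apply_ne, smul_eq_mul,
      mul_one, mul_zero, zero_add, ne_eq, zero_ne_one, one_ne_zero, not_false_eq_true] at hdy
    linear_combination hdy - β ^ 2 * (hdx - hab) + α * β * htr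
  · simp [hy, trace_fin_two]
    linear_combination β * htr

lemma trace_sq_eq_four_of_commute (hx : x ∉ center SL(2, F)) (hx4 : x.1.trace ^ 2 = 4)
    (hxy : Commute x y) : y.1.trace ^ 2 = 4 := by
  obtain ⟨α, β, hy⟩ := exists_eq_smul_one_add_smul_of_commute hx hxy
  have hdx := det_entries_eq_one x
  have hdy := det_entries_eq_one y
  rw [trace_fin_two] at hx4 ⊢
  simp only [hy, Matrix.add_apply, Matrix.smul_apply, one_apply_eq, one_apply_ne, smul_eq_mul,
    mul_one, mul_zero, zero_add, ne_eq, zero_ne_one, one_ne_zero, not_false_eq_true] at hdy ⊢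
  linear_combination 4 * hdy + β ^ 2 * (hx4 - 4 * hdx)

lemma apply_eq_zero_of_commute (hx : x ∉ center SL(2, F)) (hxy : Commute x y) {i j : Fin 2}
    (hij : i ≠ j) (h : x i j = 0) : y i j = 0 := by
  obtain ⟨α, β, hy⟩ := exists_eq_smul_one_add_smul_of_commute hx hxy
  simp [hy, h, hij]

/-- The values of the trace excluded here have square `0`, `1` or `4`: they are the traces of the
elements whose image in `PSL₂(F)` has order at most three or is unipotent. -/
def IsAdmissibleTrace (t : F) : Prop :=
  t ^ 2 ≠ 0 ∧ t ^ 2 ≠ 1 ∧ t ^ 2 ≠ 4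

lemma four_le_of_pow_mem_center (h : IsAdmissibleTrace g.1.trace) {d : ℕ} (hd : 0 < d)
    (hgd : g ^ d ∈ center SL(2, F)) : 4 ≤ d := by
  obtain ⟨h0, h1, h4⟩ := h
  have hg := notMem_center_of_trace_sq_ne_four h4
  have hsq : g.1 * g.1 = g.1.trace • g.1 - (1 : Matrix (Fin 2) (Fin 2) F) := by
    rw [mul_self_eq_trace_smul_sub_det, g.det_coe, one_smul]
  have center_of_eq {n : ℕ} {a b : F} (ha : a ≠ 0)
      (h : (g ^ n).1 = a • g.1 - b • (1 : Matrix (Fin 2) (Fin 2) F))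
      (hn : g ^ n ∈ center SL(2, F)) : g ∈ center SL(2, F) := by
    rw [mem_center_iff_entries, h] at hn
    rw [mem_center_iff_entries]
    simpa [ha] using hn
  have hgsq : (g ^ 2).1 = g.1.trace • g.1 - (1 : F) • (1 : Matrix (Fin 2) (Fin 2) F) := by
    rw [one_smul, sq]
    exact hsq
  have hgcube : (g ^ 3).1 =
      (g.1.trace ^ 2 - 1) • g.1 - g.1.trace • (1 : Matrix (Fin 2) (Fin 2) F) := by
    rw [pow_succ, Matrix.SpecialLinearGroup.coe_mul, hgsq, sub_mul, smul_mul_assoc, hsq, one_smul,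
      one_mul]
    module
  by_contra! hd4
  interval_cases d
  · exact hg (pow_one g ▸ hgd)
  · exact hg (center_of_eq (by simpa using h0) hgsq hgd)
  · exact hg (center_of_eq (sub_ne_zero.2 h1) hgcube hgd)

lemma isSplitTrace_and_trace_sq_ne_four_of_conj_commute (hm : m ∉ center SL(2, F))
    (hm4 : m.1.trace ^ 2 = 4) (hx : Commute (x * m * x⁻¹) m) (hxm : ¬ Commute x m) :
    IsSplitTrace x.1.trace ∧ x.1.trace ^ 2 ≠ 4 := by
  obtain ⟨s, hs⟩ := (isSplitTrace_of_sq_eq_four hm4).exists_conj_apply_one_zero_eq_zero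
  rw [← trace_coe_conj s] at hm4 ⊢
  rw [← conj_mem_center_iff s] at hm
  rw [← Commute.conj_iff s] at hx hxm
  rw [show s * (x * m * x⁻¹) * s⁻¹ = s * x * s⁻¹ * (s * m * s⁻¹) * (s * x * s⁻¹)⁻¹ by group] at hx
  generalize s * m * s⁻¹ = m at *
  generalize s * x * s⁻¹ = x at *
  have hmd := det_entries_eq_one m
  have hm00 : m 0 0 = m 1 1 := by
    rw [trace_fin_two] at hm4
    grind
  have hm01 : m 0 1 ≠ 0 := fun h ↦ hm (mem_center_iff_entries.2 ⟨h, hs, hm00⟩)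
  have hx10 : x 1 0 = 0 := by
    have := apply_eq_zero_of_commute hm hx.symm one_ne_zero hs
    rw [conj_apply_one_zero] at this
    simpa [hs, hm00, hm01] using this
  refine ⟨isSplitTrace_of_apply_one_zero_eq_zero hx10, fun hx4 ↦ hxm ?_⟩
  have hxd := det_entries_eq_one x
  have hx00 : x 0 0 = x 1 1 := by
    rw [trace_fin_two] at hx4
    grind
  refine Subtype.ext ?_
  ext i j
  fin_cases i <;> fin_cases j <;> simp [mul_apply, hs, hx10, hm00, hx00, mul_comm, add_comm]

lemma apply_eq_zero_of_diagonal_conj_commute (hx : x ∉ center SL(2, F)) (hx01 : x 0 1 = 0)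
    (hx10 : x 1 0 = 0) (hm : m ∉ center SL(2, F)) (hm4 : m.1.trace ^ 2 = 4)
    (h : Commute (x * m * x⁻¹) m) : m 0 1 = 0 ∨ m 1 0 = 0 := by
  obtain ⟨α, β, hαβ⟩ := exists_eq_smul_one_add_smul_of_commute hm h.symm
  have hxd := det_entries_eq_one x
  have hmd := det_entries_eq_one m
  have h01 : (x * m * x⁻¹) 0 1 = β * m 0 1 := by simp [hαβ]
  have h10 : (x * m * x⁻¹) 1 0 = β * m 1 0 := by simp [hαβ]
  have h00 : (x * m * x⁻¹) 0 0 - (x * m * x⁻¹) 1 1 = β * (m 0 0 - m 1 1) := by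
    simp [hαβ]
    ring
  rw [conj_apply_zero_one, hx01] at h01
  rw [conj_apply_one_zero, hx10] at h10
  have hd00 : (x * m * x⁻¹) 0 0 - (x * m * x⁻¹) 1 1 = m 0 0 - m 1 1 := by
    simp only [Matrix.SpecialLinearGroup.coe_mul, Matrix.SpecialLinearGroup.coe_inv,
      adjugate_fin_two, mul_apply, Fin.sum_univ_two, of_apply, cons_val', cons_val_zero,
      cons_val_one, cons_val_fin_one, hx01, hx10, neg_zero, mul_zero, zero_mul, add_zero,
      zero_add, sub_zero] at hxd ⊢
    linear_combination (m 0 0 - m 1 1) * hxd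
  rw [trace_fin_two] at hm4
  rw [mem_center_iff_entries] at hx
  rw [hx01] at hxd
  by_contra! ⟨hm01, hm10⟩
  have hβ0 : x 0 0 ^ 2 = β := mul_right_cancel₀ hm01 (by linear_combination h01)
  have hβ1 : x 1 1 ^ 2 = β := mul_right_cancel₀ hm10 (by linear_combination h10)
  have hsum : x 0 0 + x 1 1 = 0 := by
    have : (x 0 0 - x 1 1) * (x 0 0 + x 1 1) = 0 := by linear_combination hβ0 - hβ1
    exact (mul_eq_zero.1 this).resolve_left fun h ↦ hx ⟨hx01, hx10, sub_eq_zero.1 h⟩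
  have h2 : (2 : F) ≠ 0 := fun h2 ↦ hx ⟨hx01, hx10, by linear_combination hsum - x 1 1 * h2⟩
  have hm00 : m 0 0 - m 1 1 = 0 := by
    refine (mul_eq_zero.1 ?_).resolve_left h2
    linear_combination h00 - hd00 + (m 0 0 - m 1 1) * (x 0 0 * hsum - hβ0 - hxd)
  have : 2 * 2 * (m 0 1 * m 1 0) = 0 := by
    linear_combination hm4 - (m 0 0 - m 1 1) * hm00 - 4 * hmd
  simp [h2, hm01, hm10] at this

end SL2

section Triangular

variable (F : Type*) [Field F]

/-- The upper triangular matrices in `SL(2, F)`. -/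
def upperTriangular : Subgroup SL(2, F) where
  carrier := {g | g 1 0 = 0}
  one_mem' := by simp
  mul_mem' {g h} hg hh := by simp_all [mul_apply]
  inv_mem' {g} hg := by simp_all [adjugate_fin_two]

/-- The upper triangular matrices in `SL(2, F)` with `1` on the diagonal. -/
def upperUnipotent : Subgroup SL(2, F) where
  carrier := {g | g 1 0 = 0 ∧ g 0 0 = 1}
  one_mem' := by simp
  mul_mem' {g h} hg hh := by simp_all [mul_apply]
  inv_mem' {g} hg := by
    have := det_entries_eq_one g
    simp_all [adjugate_fin_two]

variable {F} {H : Subgroup SL(2, F)} {g u x y : SL(2, F)}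

lemma mem_upperTriangular_iff : g ∈ upperTriangular F ↔ g 1 0 = 0 := Iff.rfl

lemma mem_upperUnipotent_iff : g ∈ upperUnipotent F ↔ g 1 0 = 0 ∧ g 0 0 = 1 := Iff.rfl

lemma upperUnipotent_le_upperTriangular : upperUnipotent F ≤ upperTriangular F := fun _ h ↦ h.1

lemma apply_one_one_of_mem_upperUnipotent (hu : u ∈ upperUnipotent F) : u 1 1 = 1 := by
  have := det_entries_eq_one u
  rw [mem_upperUnipotent_iff] at hu
  simpa [hu.1, hu.2] using this

lemma coe_eq_of_mem_upperUnipotent (hu : u ∈ upperUnipotent F) : u.1 = !![1, u 0 1; 0, 1] := by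
  have h11 := apply_one_one_of_mem_upperUnipotent hu
  rw [mem_upperUnipotent_iff] at hu
  rw [eta_fin_two u.1, hu.1, hu.2, h11]
  simp

lemma eq_one_iff_of_mem_upperUnipotent (hu : u ∈ upperUnipotent F) : u = 1 ↔ u 0 1 = 0 := by
  refine ⟨fun h ↦ by simp [h], fun h ↦ Subtype.ext ?_⟩
  rw [coe_eq_of_mem_upperUnipotent hu, h, Matrix.SpecialLinearGroup.coe_one, one_fin_two]

lemma card_upperUnipotent : Nat.card (upperUnipotent F) = Nat.card F := by
  refine Nat.card_congr (Equiv.ofBijective (fun u : upperUnipotent F ↦ (u : SL(2, F)) 0 1) ⟨?_, ?_⟩)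
  · intro u v huv
    refine Subtype.ext (Subtype.ext ?_)
    rw [coe_eq_of_mem_upperUnipotent u.2, coe_eq_of_mem_upperUnipotent v.2]
    simpa using huv
  · intro b
    obtain ⟨u, hu⟩ := exists_coe_eq_of_det_eq_one (R := F) (a := 1) (b := b) (c := 0) (d := 1)
      (by ring)
    exact ⟨⟨u, by simp [mem_upperUnipotent_iff, hu]⟩, by simp [hu]⟩

lemma notMem_center_of_mem_upperUnipotent (hu : u ∈ upperUnipotent F) (hu1 : u ≠ 1) :
    u ∉ center SL(2, F) :=
  fun h ↦ hu1 ((eq_one_iff_of_mem_upperUnipotent hu).2 (mem_center_iff_entries.1 h).1)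

lemma mul_apply_zero_zero_of_mem_upperTriangular (hy : y ∈ upperTriangular F) :
    (x * y) 0 0 = x 0 0 * y 0 0 := by
  rw [mem_upperTriangular_iff] at hy
  simp [mul_apply, hy]

lemma conj_mul_inv_mem_upperUnipotent (hx : x ∈ upperTriangular F) (hy : y ∈ upperTriangular F) :
    x * y * x⁻¹ * y⁻¹ ∈ upperUnipotent F := by
  refine ⟨mul_mem (mul_mem (mul_mem hx hy) (inv_mem hx)) (inv_mem hy), ?_⟩
  have inv_apply {z : SL(2, F)} (hz : z ∈ upperTriangular F) : z 0 0 * z⁻¹ 0 0 = 1 := by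
    rw [← mul_apply_zero_zero_of_mem_upperTriangular (inv_mem hz)]
    simp
  rw [mul_apply_zero_zero_of_mem_upperTriangular (inv_mem hy),
    mul_apply_zero_zero_of_mem_upperTriangular (inv_mem hx),
    mul_apply_zero_zero_of_mem_upperTriangular hy]
  linear_combination y 0 0 * y⁻¹ 0 0 * inv_apply hx + inv_apply hy

lemma upperTriangular_le_normalizer_upperUnipotent :
    upperTriangular F ≤ normalizer (upperUnipotent F) := by
  have conj_mem {x u : SL(2, F)} (hx : x ∈ upperTriangular F) (hu : u ∈ upperUnipotent F) :
      x * u * x⁻¹ ∈ upperUnipotent F := by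
    simpa using mul_mem (conj_mul_inv_mem_upperUnipotent hx hu.1) hu
  refine fun x hx ↦ mem_normalizer_iff.2 fun u ↦ ⟨conj_mem hx, fun h ↦ ?_⟩
  simpa [mul_assoc] using conj_mem (inv_mem hx) h

lemma commute_iff_of_mem_upperUnipotent (hu : u ∈ upperUnipotent F) (hu1 : u ≠ 1) :
    Commute g u ↔ g 1 0 = 0 ∧ g 0 0 = g 1 1 := by
  rw [Ne, eq_one_iff_of_mem_upperUnipotent hu] at hu1
  have h11 := apply_one_one_of_mem_upperUnipotent hu
  rw [mem_upperUnipotent_iff] at hu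
  constructor
  · intro h
    have entry (i j) : (g * u) i j = (u * g) i j := by rw [h.eq]
    have h00 := entry 0 0
    have h01 := entry 0 1
    simp only [Matrix.SpecialLinearGroup.coe_mul, mul_apply, Fin.sum_univ_two, hu.1, hu.2, h11,
      mul_one, one_mul, mul_zero, add_zero, left_eq_add, mul_eq_zero] at h00 h01
    grind
  · intro h
    refine Subtype.ext (Matrix.ext fun i j ↦ ?_)
    fin_cases i <;> fin_cases j <;> simp [mul_apply, hu.1, hu.2, h11, h.1, h.2]
    ring

/-- A matrix with equal diagonal entries in `upperTriangular F` is a scalar times a unipotent. -/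
lemma center_relIndex_centralizerIn_of_mem_upperUnipotent [Finite F] (hH : center SL(2, F) ≤ H)
    (hu : u ∈ upperUnipotent F) (hu1 : u ≠ 1) :
    (center SL(2, F)).relIndex (centralizerIn H u) = Nat.card ↥(H ⊓ upperUnipotent F) := by
  have hC : centralizerIn H u = H ⊓ upperUnipotent F ⊔ center SL(2, F) := by
    refine le_antisymm (fun k hk ↦ ?_) (sup_le (fun k hk ↦ ?_) (center_le_centralizerIn hH))
    · rw [mem_centralizerIn_iff, commute_iff_of_mem_upperUnipotent hu hu1] at hk
      obtain ⟨hkH, hk10, hk00⟩ := hk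
      have hd := det_entries_eq_one k
      obtain ⟨z, hz⟩ := exists_coe_eq_of_det_eq_one (R := F) (a := k 0 0) (b := 0) (c := 0)
        (d := k 0 0) (by linear_combination hd + k 0 0 * hk00 + k 0 1 * hk10)
      have hzZ : z ∈ center SL(2, F) := mem_center_iff_entries.2 (by simp [hz])
      refine mem_sup_of_normal_right.2 ⟨k * z⁻¹,
        mem_inf.2 ⟨mul_mem hkH (inv_mem (hH hzZ)), ?_⟩, z, hzZ, by simp⟩
      rw [mem_upperUnipotent_iff]
      simp only [Matrix.SpecialLinearGroup.coe_mul, Matrix.SpecialLinearGroup.coe_inv, hz,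
        adjugate_fin_two, mul_apply, Fin.sum_univ_two, of_apply, cons_val', cons_val_zero,
        cons_val_one, cons_val_fin_one, hk10, neg_zero, zero_mul, mul_zero, add_zero, true_and]
      linear_combination hd + k 0 0 * hk00 + k 0 1 * hk10
    · rw [mem_centralizerIn_iff, commute_iff_of_mem_upperUnipotent hu hu1]
      exact ⟨hk.1, hk.2.1, hk.2.2.trans (apply_one_one_of_mem_upperUnipotent hk.2).symm⟩
  have hdisj : center SL(2, F) ⊓ (H ⊓ upperUnipotent F) = ⊥ := by
    refine (eq_bot_iff_forall _).2 fun k hk ↦ ?_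
    by_contra h
    exact notMem_center_of_mem_upperUnipotent hk.2.2 h hk.1
  rw [hC, relIndex_sup_right, ← inf_relIndex_right, hdisj, relIndex_bot_left]

lemma normalizerIn_of_mem_upperUnipotent (hu : u ∈ upperUnipotent F) (hu1 : u ≠ 1) :
    normalizerIn H u = H ⊓ upperTriangular F := by
  ext x
  rw [mem_normalizerIn_iff (notMem_center_of_mem_upperUnipotent hu hu1), mem_inf,
    and_congr_right_iff, commute_iff_of_mem_upperUnipotent hu hu1]
  refine fun _ ↦ ⟨fun h ↦ ?_, fun hx ↦ ?_⟩
  · have hx := h.1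
    rw [Ne, eq_one_iff_of_mem_upperUnipotent hu] at hu1
    rw [conj_apply_one_zero, hu.1, hu.2, apply_one_one_of_mem_upperUnipotent hu] at hx
    simpa [hu1, mem_upperTriangular_iff] using hx
  · have hxu := (mem_normalizer_iff.1 (upperTriangular_le_normalizer_upperUnipotent hx) u).1 hu
    exact ⟨hxu.1, hxu.2.trans (apply_one_one_of_mem_upperUnipotent hxu).symm⟩

/-- As `u ↦ u * y * u⁻¹ * y⁻¹` is an injective self-map of the finite set `H ⊓ upperUnipotent F`, it
is onto, so each upper triangular element of `H` differs from one commuting with `y` by a unipotent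
factor. -/
lemma card_inf_upperTriangular [Finite F] (hyH : y ∈ H) (hy : y ∉ center SL(2, F))
    (hy01 : y 0 1 = 0) (hy10 : y 1 0 = 0) :
    Nat.card ↥(H ⊓ upperTriangular F) =
      Nat.card ↥(H ⊓ upperUnipotent F) * Nat.card (centralizerIn H y) := by
  let U := H ⊓ upperUnipotent F
  have comm_mem {b : SL(2, F)} (hb : b ∈ H ⊓ upperTriangular F) : b * y * b⁻¹ * y⁻¹ ∈ U := by
    rw [mem_inf] at hb ⊢
    exact ⟨mul_mem (mul_mem (mul_mem hb.1 hyH) (inv_mem hb.1)) (inv_mem hyH),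
      conj_mul_inv_mem_upperUnipotent hb.2 hy10⟩
  have hUB : U ≤ H ⊓ upperTriangular F := inf_le_inf_left H upperUnipotent_le_upperTriangular
  have hCB : centralizerIn H y ≤ H ⊓ upperTriangular F := fun k hk ↦
    mem_inf.2 ⟨hk.1,
      apply_eq_zero_of_commute hy (mem_centralizerIn_iff.1 hk).2.symm one_ne_zero hy10⟩
  have eq_one {u : SL(2, F)} (hu : u ∈ U) (h : Commute u y) : u = 1 :=
    (eq_one_iff_of_mem_upperUnipotent hu.2).2
      (apply_eq_zero_of_commute hy h.symm zero_ne_one hy01)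
  let comm (u : U) : U := ⟨_, comm_mem (hUB u.2)⟩
  have comm_inj : comm.Injective := by
    intro u v huv
    have hconj := mul_right_cancel (congrArg Subtype.val huv)
    have := eq_one (mul_mem (inv_mem v.2) u.2) (commute_inv_mul_of_conj_eq hconj)
    exact Subtype.ext (inv_mul_eq_one.1 this).symm
  let mul (p : U × centralizerIn H y) : ↥(H ⊓ upperTriangular F) :=
    ⟨p.1 * p.2, mul_mem (hUB p.1.2) (hCB p.2.2)⟩
  have mul_inj : mul.Injective := by
    have hdisj : Disjoint U (centralizerIn H y) := disjoint_def.2 fun hu hk ↦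
      eq_one hu (mem_centralizerIn_iff.1 hk).2
    exact fun p r hpr ↦ mul_injective_of_disjoint hdisj (congrArg Subtype.val hpr)
  have mul_surj : mul.Surjective := by
    intro b
    obtain ⟨u, hu⟩ := (Finite.injective_iff_surjective.1 comm_inj) ⟨_, comm_mem b.2⟩
    have hconj := mul_right_cancel (congrArg Subtype.val hu).symm
    have hk : (u : SL(2, F))⁻¹ * b ∈ centralizerIn H y :=
      mem_centralizerIn_iff.2 ⟨mul_mem (inv_mem u.2.1) b.2.1, commute_inv_mul_of_conj_eq hconj⟩
    exact ⟨⟨u, _, hk⟩, Subtype.ext (mul_inv_cancel_left _ _)⟩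
  rw [← Nat.card_prod]
  exact (Nat.card_congr (Equiv.ofBijective mul ⟨mul_inj, mul_surj⟩)).symm

lemma center_relIndex_centralizerIn_add_one_le_card [Finite F] (hy : y ∉ center SL(2, F))
    (hy01 : y 0 1 = 0) (hy10 : y 1 0 = 0) (hZ : center SL(2, F) ≤ H)
    (hu : u ∈ H ⊓ upperUnipotent F) (hu1 : u ≠ 1) :
    (center SL(2, F)).relIndex (centralizerIn H y) + 1 ≤ Nat.card ↥(H ⊓ upperUnipotent F) := by
  have centralizer_inf : centralizer {u} ⊓ centralizerIn H y = center SL(2, F) := by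
    refine le_antisymm (fun k hk ↦ ?_) (le_inf (center_le_centralizer _)
      (center_le_centralizerIn hZ))
    have hku := (commute_iff_of_mem_upperUnipotent hu.2 hu1).1
      (mem_centralizer_singleton_iff.1 hk.1)
    have hky := (mem_centralizerIn_iff.1 hk.2).2
    exact mem_center_iff_entries.2
      ⟨apply_eq_zero_of_commute hy hky.symm zero_ne_one hy01, hku.1, hku.2⟩
  have normalizes : centralizerIn H y ≤ normalizer (H ⊓ upperUnipotent F : Subgroup SL(2, F)) := by
    refine le_trans (fun k hk ↦ ?_) inf_normalizer_le_normalizer_inf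
    exact mem_inf.2 ⟨le_normalizer hk.1, upperTriangular_le_normalizer_upperUnipotent
      (apply_eq_zero_of_commute hy (mem_centralizerIn_iff.1 hk).2.symm one_ne_zero hy10)⟩
  simpa only [← inf_relIndex_right (centralizer {u}), centralizer_inf] using
    relIndex_centralizer_add_one_le normalizes hu hu1

lemma card_inf_upperUnipotent_add_one_le_relIndex [Finite F] (hx : x ∈ H)
    (hx10 : x 1 0 ≠ 0) :
    Nat.card ↥(H ⊓ upperUnipotent F) + 1 ≤ (H ⊓ upperTriangular F).relIndex H := by
  refine card_add_one_le_relIndex (inf_le_inf_left H upperUnipotent_le_upperTriangular) inf_le_left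
    hx (fun h ↦ hx10 h.2) fun u hu hux ↦ (eq_one_iff_of_mem_upperUnipotent hu.2).2 ?_
  have h10 : (x⁻¹ * u * x⁻¹⁻¹) 1 0 = 0 := by rw [inv_inv]; exact hux.2
  rw [conj_apply_one_zero, hu.2.1, hu.2.2, apply_one_one_of_mem_upperUnipotent hu.2] at h10
  simpa [adjugate_fin_two, hx10] using h10

lemma centralizerIn_relIndex_normalizerIn_of_mem_upperUnipotent [Finite F]
    (hH : center SL(2, F) ≤ H) (hu : u ∈ H ⊓ upperUnipotent F) (hu1 : u ≠ 1) (hyH : y ∈ H)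
    (hy : y ∉ center SL(2, F))
    (hy01 : y 0 1 = 0) (hy10 : y 1 0 = 0) :
    (centralizerIn H u).relIndex (normalizerIn H u) =
      (center SL(2, F)).relIndex (centralizerIn H y) := by
  have hN := card_mul_relIndex (centralizerIn_le_normalizerIn (H := H) (g := u))
  rw [← card_mul_relIndex (center_le_centralizerIn hH),
    center_relIndex_centralizerIn_of_mem_upperUnipotent hH hu.2 hu1,
    normalizerIn_of_mem_upperUnipotent hu.2 hu1, card_inf_upperTriangular hyH hy hy01 hy10,
    ← card_mul_relIndex (center_le_centralizerIn hH)] at hN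
  rw [normalizerIn_of_mem_upperUnipotent hu.2 hu1]
  refine Nat.eq_of_mul_eq_mul_left (Nat.mul_pos (Nat.card_pos (α := center SL(2, F)))
    (Nat.card_pos (α := ↥(H ⊓ upperUnipotent F)))) ?_
  linear_combination hN

lemma eq_top_of_upperUnipotent_le (hU : upperUnipotent F ≤ H) (hx : x ∈ H) (hx10 : x 1 0 ≠ 0) :
    H = ⊤ := by
  have upper_mem (b : F) : Matrix.SpecialLinearGroup.transvection zero_ne_one b ∈ H :=
    hU (by simp [mem_upperUnipotent_iff, coe_transvection_zero_one])
  obtain ⟨n, hn⟩ := exists_coe_eq_of_det_eq_one (R := F) (a := 0) (b := -(x 1 0)⁻¹) (c := x 1 0)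
    (d := 0) (by field_simp; ring)
  have n_mem : n ∈ H := by
    have : n = Matrix.SpecialLinearGroup.transvection zero_ne_one (-(x 0 0 / x 1 0)) * x *
        Matrix.SpecialLinearGroup.transvection zero_ne_one (-(x 1 1 / x 1 0)) := by
      have hd := det_entries_eq_one x
      ext i j
      fin_cases i <;> fin_cases j <;>
        simp [hn, mul_apply, coe_transvection_zero_one, vecMul, dotProduct]
      all_goals field_simp
      all_goals grind
    exact this ▸ mul_mem (mul_mem (upper_mem _) hx) (upper_mem _)
  have lower_mem (b : F) : Matrix.SpecialLinearGroup.transvection one_ne_zero b ∈ H := by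
    have : Matrix.SpecialLinearGroup.transvection (one_ne_zero (α := Fin 2)) b =
        n * Matrix.SpecialLinearGroup.transvection zero_ne_one (-(b / x 1 0 ^ 2)) * n⁻¹ := by
      ext i j
      fin_cases i <;> fin_cases j <;>
        simp [hn, mul_apply, coe_transvection_zero_one, coe_transvection_one_zero, hx10,
          adjugate_fin_two]
      field_simp
    exact this ▸ mul_mem (mul_mem n_mem (upper_mem _)) (inv_mem n_mem)
  refine (eq_top_iff' H).2 fun g ↦ ?_
  induction g using Matrix.SL2.transvection_induction with
  | htransvec i j hij b =>
    fin_cases i <;> fin_cases j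
    · exact (hij rfl).elim
    · exact upper_mem b
    · exact lower_mem b
    · exact (hij rfl).elim
  | hmul A B hA hB => exact mul_mem hA hB

lemma eq_top_of_card_inf_upperUnipotent [Finite F]
    (h : Nat.card ↥(H ⊓ upperUnipotent F) = Nat.card F) (hx : x ∈ H) (hx10 : x 1 0 ≠ 0) :
    H = ⊤ := by
  refine eq_top_of_upperUnipotent_le ?_ hx hx10
  rw [← card_upperUnipotent (F := F)] at h
  exact inf_eq_right.1 (eq_of_le_of_card_ge inf_le_right h.ge)

end Triangular

section Densities

variable {F : Type*} [Field F] {H : Subgroup SL(2, F)} {g k : SL(2, F)}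

lemma trace_sq_ne_four_of_mem_centralizerClass (hg : g.1.trace ^ 2 ≠ 4)
    (hk : k ∈ centralizerClass H g) : k.1.trace ^ 2 ≠ 4 := by
  obtain ⟨-, hkZ, x, -, hx⟩ := hk
  intro h4
  rw [← trace_coe_conj x] at h4
  exact hg (trace_sq_eq_four_of_commute (mt (conj_mem_center_iff x k).1 hkZ) h4 hx)

/-- An element normalizing the centralizer of `g` conjugates `g` to an element of the centralizer
having the same trace, that is, to `g` or `g⁻¹`. -/
lemma relIndex_normalizerIn_eq_one_or_two (hg4 : g.1.trace ^ 2 ≠ 4) :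
    (centralizerIn H g).relIndex (normalizerIn H g) = 1 ∨
      (centralizerIn H g).relIndex (normalizerIn H g) = 2 ∧ ∃ w ∈ H, w * g * w⁻¹ = g⁻¹ := by
  have mem_or_conj_eq {b : SL(2, F)} (hb : b ∈ normalizerIn H g) :
      b ∈ centralizerIn H g ∨ b * g * b⁻¹ = g⁻¹ := by
    obtain ⟨hbH, hb⟩ := (mem_normalizerIn_iff (notMem_center_of_trace_sq_ne_four hg4)).1 hb
    refine (eq_or_eq_inv_of_commute hg4 hb.symm (trace_coe_conj b g)).imp_left fun h ↦ ?_
    exact mem_centralizerIn_iff.2 ⟨hbH, mul_inv_eq_iff_eq_mul.1 h⟩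
  by_cases hle : normalizerIn H g ≤ centralizerIn H g
  · exact .inl (relIndex_eq_one.2 hle)
  obtain ⟨w, hw, hwC⟩ := SetLike.not_le_iff_exists.1 hle
  have hwg := (mem_or_conj_eq hw).resolve_left hwC
  refine .inr ⟨relIndex_eq_two_iff_exists_notMem_and'.2 ⟨w, hw, hwC, fun b hb ↦ ?_⟩, w, hw.1, hwg⟩
  refine (mem_or_conj_eq hb).symm.imp_left fun hbg ↦ mem_centralizerIn_iff.2
    ⟨mul_mem hw.1 hb.1, mul_inv_eq_iff_eq_mul.1 ?_⟩
  calc w * b * g * (w * b)⁻¹ = w * (b * g * b⁻¹) * w⁻¹ := by group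
    _ = (w * g * w⁻¹)⁻¹ := by rw [hbg]; group
    _ = g := by rw [hwg, inv_inv]

variable [Finite F]

lemma four_le_center_relIndex_centralizerIn (hg : g ∈ H) (h : IsAdmissibleTrace g.1.trace) :
    4 ≤ (center SL(2, F)).relIndex (centralizerIn H g) :=
  four_le_of_pow_mem_center h (Nat.pos_of_ne_zero index_ne_zero_of_finite)
    (pow_relIndex_mem _ (mem_centralizerIn_iff.2 ⟨hg, rfl⟩))

lemma two_le_center_relIndex_centralizerIn (hg : g ∈ H) (hgZ : g ∉ center SL(2, F)) :
    2 ≤ (center SL(2, F)).relIndex (centralizerIn H g) := by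
  have h1 : (center SL(2, F)).relIndex (centralizerIn H g) ≠ 1 := fun h ↦
    hgZ (relIndex_eq_one.1 h (mem_centralizerIn_iff.2 ⟨hg, rfl⟩))
  have h0 : (center SL(2, F)).relIndex (centralizerIn H g) ≠ 0 :=
    index_ne_zero_of_finite
  omega

lemma three_mul_card_le_four_mul_ncard_centralizerClass (hH : center SL(2, F) ≤ H) (hg : g ∈ H)
    (h : IsAdmissibleTrace g.1.trace) :
    3 * Nat.card H ≤ 4 * ((centralizerClass H g).ncard *
      (centralizerIn H g).relIndex (normalizerIn H g)) := by
  have hd := four_le_center_relIndex_centralizerIn hg h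
  have := ncard_centralizerClass_mul_relIndex hH (notMem_center_of_trace_sq_ne_four h.2.2)
  refine le_of_mul_le_mul_left ?_ (zero_lt_four.trans_le hd)
  nlinarith

lemma card_le_two_mul_ncard_centralizerClass (hH : center SL(2, F) ≤ H) (hg : g ∈ H)
    (hgZ : g ∉ center SL(2, F)) :
    Nat.card H ≤ 2 * ((centralizerClass H g).ncard *
      (centralizerIn H g).relIndex (normalizerIn H g)) := by
  have hd := two_le_center_relIndex_centralizerIn hg hgZ
  have := ncard_centralizerClass_mul_relIndex hH hgZ
  refine le_of_mul_le_mul_left ?_ (zero_lt_two.trans_le hd)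
  nlinarith

end Densities

section Mixed

variable {F : Type*} [Field F] {H : Subgroup SL(2, F)} {m y₁ y₂ k : SL(2, F)}

/-- `H` is a subgroup containing the center, the element `y₁` of the diagonal torus, and the element
`y₂` of a nonsplit torus, both with admissible trace. Such a subgroup turns out to be conjugate to
`SL(2, K)` for a subfield `K`, or to contain such a conjugate with index two. -/
structure IsMixedSubgroup (H : Subgroup SL(2, F)) (y₁ y₂ : SL(2, F)) : Prop where
  center_le : center SL(2, F) ≤ H
  mem_left : y₁ ∈ H
  mem_right : y₂ ∈ H
  left_zero_one : y₁ 0 1 = 0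
  left_one_zero : y₁ 1 0 = 0
  admissible_left : IsAdmissibleTrace y₁.1.trace
  admissible_right : IsAdmissibleTrace y₂.1.trace
  not_split_right : ¬ IsSplitTrace y₂.1.trace

namespace IsMixedSubgroup

lemma notMem_center_left (hH : IsMixedSubgroup H y₁ y₂) : y₁ ∉ center SL(2, F) :=
  notMem_center_of_trace_sq_ne_four hH.admissible_left.2.2

lemma notMem_center_right (hH : IsMixedSubgroup H y₁ y₂) : y₂ ∉ center SL(2, F) :=
  notMem_center_of_trace_sq_ne_four hH.admissible_right.2.2

lemma right_one_zero_ne_zero (hH : IsMixedSubgroup H y₁ y₂) : y₂ 1 0 ≠ 0 :=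
  fun h ↦ hH.not_split_right (isSplitTrace_of_apply_one_zero_eq_zero h)

lemma isSplitTrace_of_mem_class_left (hH : IsMixedSubgroup H y₁ y₂)
    (hk : k ∈ centralizerClass H y₁) : IsSplitTrace k.1.trace := by
  obtain ⟨-, -, x, -, hx⟩ := hk
  rw [← trace_coe_conj x]
  exact (isSplitTrace_of_apply_one_zero_eq_zero hH.left_one_zero).of_commute
    hH.notMem_center_left hx.symm

lemma not_isSplitTrace_of_mem_class_right (hH : IsMixedSubgroup H y₁ y₂)
    (hk : k ∈ centralizerClass H y₂) : ¬ IsSplitTrace k.1.trace := by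
  obtain ⟨-, hkZ, x, -, hx⟩ := hk
  intro h
  rw [← trace_coe_conj x] at h
  exact hH.not_split_right (h.of_commute (mt (conj_mem_center_iff x k).1 hkZ) hx)

lemma disjoint_classes (hH : IsMixedSubgroup H y₁ y₂) :
    Disjoint (centralizerClass H y₁) (centralizerClass H y₂) :=
  disjoint_centralizerClass hH.mem_right hH.notMem_center_right fun h ↦
    hH.not_split_right (hH.isSplitTrace_of_mem_class_left h)

lemma notMem_classes_of_trace_sq_eq_four (hH : IsMixedSubgroup H y₁ y₂)
    (hm4 : m.1.trace ^ 2 = 4) : m ∉ centralizerClass H y₁ ∧ m ∉ centralizerClass H y₂ :=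
  ⟨fun h ↦ trace_sq_ne_four_of_mem_centralizerClass hH.admissible_left.2.2 h hm4,
    fun h ↦ trace_sq_ne_four_of_mem_centralizerClass hH.admissible_right.2.2 h hm4⟩

variable [Finite F]

lemma ncard_union_classes (hH : IsMixedSubgroup H y₁ y₂) :
    (centralizerClass H y₁ ∪ centralizerClass H y₂).ncard =
      (centralizerClass H y₁).ncard + (centralizerClass H y₂).ncard :=
  Set.ncard_union_eq hH.disjoint_classes

lemma ncard_sdiff_center_add_card_center (hH : IsMixedSubgroup H y₁ y₂) :
    ((H : Set SL(2, F)) \ center SL(2, F)).ncard + Nat.card (center SL(2, F)) = Nat.card H :=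
  Set.ncard_sdiff_add_ncard_of_subset hH.center_le

lemma ncard_add_ncard_add_card_center_le (hH : IsMixedSubgroup H y₁ y₂) :
    (centralizerClass H y₁).ncard + (centralizerClass H y₂).ncard + Nat.card (center SL(2, F)) ≤
      Nat.card H := by
  rw [← hH.ncard_union_classes, ← hH.ncard_sdiff_center_add_card_center]
  exact Nat.add_le_add_right
    (Set.ncard_le_ncard (Set.union_subset centralizerClass_subset centralizerClass_subset)) _

/-- If one of the indices were `1`, the two classes together would have density at least
`3 / 4 + 3 / 8`. -/
lemma relIndex_normalizerIn_eq_two (hH : IsMixedSubgroup H y₁ y₂) :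
    ((centralizerIn H y₁).relIndex (normalizerIn H y₁) = 2 ∧ ∃ w ∈ H, w * y₁ * w⁻¹ = y₁⁻¹) ∧
      (centralizerIn H y₂).relIndex (normalizerIn H y₂) = 2 := by
  have hsum := hH.ncard_add_ncard_add_card_center_le
  have h₁ := three_mul_card_le_four_mul_ncard_centralizerClass hH.center_le hH.mem_left
    hH.admissible_left
  have h₂ := three_mul_card_le_four_mul_ncard_centralizerClass hH.center_le hH.mem_right
    hH.admissible_right
  have hpos : 0 < Nat.card (center SL(2, F)) := Nat.card_pos
  rcases relIndex_normalizerIn_eq_one_or_two (H := H) hH.admissible_left.2.2 with e₁ | e₁ <;>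
  rcases relIndex_normalizerIn_eq_one_or_two (H := H) hH.admissible_right.2.2 with e₂ | e₂
  · rw [e₁] at h₁
    rw [e₂] at h₂
    omega
  · rw [e₁] at h₁
    rw [e₂.1] at h₂
    omega
  · rw [e₁.1] at h₁
    rw [e₂] at h₂
    omega
  · exact ⟨e₁, e₂.1⟩

lemma three_mul_card_le_eight_mul_ncard_left (hH : IsMixedSubgroup H y₁ y₂) :
    3 * Nat.card H ≤ 8 * (centralizerClass H y₁).ncard := by
  have h := three_mul_card_le_four_mul_ncard_centralizerClass hH.center_le hH.mem_left
    hH.admissible_left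
  rw [hH.relIndex_normalizerIn_eq_two.1.1] at h
  omega

lemma three_mul_card_le_eight_mul_ncard_right (hH : IsMixedSubgroup H y₁ y₂) :
    3 * Nat.card H ≤ 8 * (centralizerClass H y₂).ncard := by
  have h := three_mul_card_le_four_mul_ncard_centralizerClass hH.center_le hH.mem_right
    hH.admissible_right
  rw [hH.relIndex_normalizerIn_eq_two.2] at h
  omega

/-- The first two classes have density at least `3 / 8` each, and the center is left over. -/
lemma four_mul_ncard_centralizerClass_lt_card (hH : IsMixedSubgroup H y₁ y₂) (hk : k ∈ H)
    (hkZ : k ∉ center SL(2, F)) (hk₁ : k ∉ centralizerClass H y₁)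
    (hk₂ : k ∉ centralizerClass H y₂) :
    4 * (centralizerClass H k).ncard < Nat.card H := by
  have hdisj : Disjoint (centralizerClass H y₁ ∪ centralizerClass H y₂) (centralizerClass H k) :=
    (disjoint_centralizerClass hk hkZ hk₁).union_left (disjoint_centralizerClass hk hkZ hk₂)
  have hle : (centralizerClass H y₁ ∪ centralizerClass H y₂ ∪ centralizerClass H k).ncard ≤ _ :=
    Set.ncard_le_ncard (Set.union_subset (Set.union_subset centralizerClass_subset
      centralizerClass_subset) centralizerClass_subset) (Set.toFinite _)
  rw [Set.ncard_union_eq hdisj, hH.ncard_union_classes] at hle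
  have hcard := hH.ncard_sdiff_center_add_card_center
  have hpos : 0 < Nat.card (center SL(2, F)) := Nat.card_pos
  have h₁ := hH.three_mul_card_le_eight_mul_ncard_left
  have h₂ := hH.three_mul_card_le_eight_mul_ncard_right
  omega

lemma mem_class_left_or_right (hH : IsMixedSubgroup H y₁ y₂) (hk : k ∈ H)
    (hk4 : k.1.trace ^ 2 ≠ 4) : k ∈ centralizerClass H y₁ ∨ k ∈ centralizerClass H y₂ := by
  by_contra! ⟨hk₁, hk₂⟩
  have hkZ := notMem_center_of_trace_sq_ne_four hk4
  have hlt := hH.four_mul_ncard_centralizerClass_lt_card hk hkZ hk₁ hk₂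
  have hle := card_le_two_mul_ncard_centralizerClass hH.center_le hk hkZ
  rcases relIndex_normalizerIn_eq_one_or_two (H := H) hk4 with e | e
  · rw [e] at hle
    omega
  · rw [e.1] at hle
    omega

/-- Each of the two classes has at most `card H / 2 - card center` elements, so they do not
exhaust the noncentral elements of `H`. -/
lemma exists_trace_sq_eq_four (hH : IsMixedSubgroup H y₁ y₂) :
    ∃ m ∈ H, m ∉ center SL(2, F) ∧ m.1.trace ^ 2 = 4 := by
  by_contra! h
  have hsub : (H : Set SL(2, F)) \ center SL(2, F) ⊆
      centralizerClass H y₁ ∪ centralizerClass H y₂ :=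
    fun k hk ↦ hH.mem_class_left_or_right hk.1 (h k hk.1 hk.2)
  have hle := Set.ncard_le_ncard hsub
  rw [hH.ncard_union_classes] at hle
  have hcard := hH.ncard_sdiff_center_add_card_center
  have h₁ := ncard_centralizerClass_add_card_center_mul_relIndex_le hH.center_le
    hH.notMem_center_left
  have h₂ := ncard_centralizerClass_add_card_center_mul_relIndex_le hH.center_le
    hH.notMem_center_right
  rw [hH.relIndex_normalizerIn_eq_two.1.1] at h₁
  rw [hH.relIndex_normalizerIn_eq_two.2] at h₂
  have hpos : 0 < Nat.card (center SL(2, F)) := Nat.card_pos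
  omega

/-- The normalizer of the centralizer of `m` in `H` is larger than the centralizer, since otherwise
the class of `m` would have density at least `1 / 2`. -/
lemma exists_conj_commute_not_commute (hH : IsMixedSubgroup H y₁ y₂) (hm : m ∈ H)
    (hmZ : m ∉ center SL(2, F)) (hm4 : m.1.trace ^ 2 = 4) :
    ∃ b ∈ H, Commute (b * m * b⁻¹) m ∧ ¬ Commute b m := by
  obtain ⟨hm₁, hm₂⟩ := hH.notMem_classes_of_trace_sq_eq_four hm4
  have hlt := hH.four_mul_ncard_centralizerClass_lt_card hm hmZ hm₁ hm₂
  have hle := card_le_two_mul_ncard_centralizerClass hH.center_le hm hmZ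
  have hne : (centralizerIn H m).relIndex (normalizerIn H m) ≠ 1 := fun e ↦ by
    rw [e] at hle
    omega
  obtain ⟨b, hb, hbC⟩ := SetLike.not_le_iff_exists.1 (mt relIndex_eq_one.2 hne)
  obtain ⟨hbH, hbm⟩ := (mem_normalizerIn_iff hmZ).1 hb
  exact ⟨b, hbH, hbm, fun h ↦ hbC (mem_centralizerIn_iff.2 ⟨hbH, h⟩)⟩

lemma exists_antidiagonal_mem (hH : IsMixedSubgroup H y₁ y₂) : ∃ w ∈ H, w 0 0 = 0 ∧ w 1 1 = 0 := by
  obtain ⟨w, hw, hwy⟩ := hH.relIndex_normalizerIn_eq_two.1.2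
  have hmul : w * y₁ = y₁⁻¹ * w := mul_inv_eq_iff_eq_mul.1 hwy
  have hy := hH.notMem_center_left
  rw [mem_center_iff_entries] at hy
  have entry (i j) : (w * y₁) i j = (y₁⁻¹ * w) i j := by rw [hmul]
  have h00 := entry 0 0
  have h11 := entry 1 1
  simp only [Matrix.SpecialLinearGroup.coe_mul, Matrix.SpecialLinearGroup.coe_inv, adjugate_fin_two,
    mul_apply, Fin.sum_univ_two, of_apply, cons_val', cons_val_zero, cons_val_one,
    cons_val_fin_one, hH.left_zero_one, hH.left_one_zero, neg_zero, zero_mul, mul_zero, add_zero,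
    zero_add, true_and] at h00 h11 hy
  exact ⟨w, hw, by grind, by grind⟩

lemma exists_conj_mem_upperTriangular (hH : IsMixedSubgroup H y₁ y₂) (hm : m ∈ H)
    (hmZ : m ∉ center SL(2, F)) (hm4 : m.1.trace ^ 2 = 4) :
    ∃ x ∈ H, x * m * x⁻¹ ∈ upperTriangular F := by
  obtain ⟨b, hb, hbm, hbm'⟩ := hH.exists_conj_commute_not_commute hm hmZ hm4
  obtain ⟨hbs, hb4⟩ := isSplitTrace_and_trace_sq_ne_four_of_conj_commute hmZ hm4 hbm hbm'
  obtain ⟨-, hbZ, x, hx, hxb⟩ := (hH.mem_class_left_or_right hb hb4).resolve_right fun h ↦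
    hH.not_isSplitTrace_of_mem_class_right h hbs
  have diagonal {i j : Fin 2} (hij : i ≠ j) (h : y₁ i j = 0) : (x * b * x⁻¹) i j = 0 :=
    apply_eq_zero_of_commute hH.notMem_center_left hxb.symm hij h
  have hconj : Commute (x * b * x⁻¹ * (x * m * x⁻¹) * (x * b * x⁻¹)⁻¹) (x * m * x⁻¹) := by
    have := (Commute.conj_iff x).2 hbm
    simpa [mul_assoc] using this
  rcases apply_eq_zero_of_diagonal_conj_commute (mt (conj_mem_center_iff x b).1 hbZ)
    (diagonal zero_ne_one hH.left_zero_one) (diagonal one_ne_zero hH.left_one_zero)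
    (mt (conj_mem_center_iff x m).1 hmZ) (by rwa [trace_coe_conj]) hconj with h | h
  · obtain ⟨w, hw, -, hw11⟩ := hH.exists_antidiagonal_mem
    refine ⟨w * x, mul_mem hw hx, ?_⟩
    rw [show w * x * m * (w * x)⁻¹ = w * (x * m * x⁻¹) * w⁻¹ by group, mem_upperTriangular_iff,
      conj_apply_one_zero, h, hw11]
    ring
  · exact ⟨x, hx, h⟩

end IsMixedSubgroup

end Mixed

/-- Here `h`, `z`, `q` are the orders of `H`, its center and its unipotent subgroup, the `Tᵢ` are
the sizes of the three classes, the `dᵢ` the indices of the center in the centralizers, and `m` is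
the index of the upper triangular subgroup. With `j = d₂ - d₁` and `w = 2 * d₂ - q * j` the class
equation reads `m * w = 2 * d₂`, which gives `2 * d₁ = w + (q - 2) * j` and `w ≤ j`. -/
lemma class_equation_solutions {z d₁ d₂ q m h T₁ T₂ T₃ : ℕ} (hT₁ : T₁ * (2 * d₁) + h = d₁ * h)
    (hT₂ : T₂ * (2 * d₂) + h = d₂ * h) (hT₃ : T₃ * (d₁ * q) + h = q * h)
    (hsum : T₁ + T₂ + T₃ + z = h) (hh : h = z * d₁ * q * m) (hz : 0 < z) (hm : q + 1 ≤ m)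
    (hq : d₁ + 1 ≤ q) (hd₁ : 4 ≤ d₁) (hd₂ : 0 < d₂) :
    d₁ + 1 = q ∧ d₂ = q + 1 ∨ 2 * d₁ + 1 = q ∧ 2 * d₂ = q + 1 := by
  have hpos : 0 < h := by
    rw [hh]
    have : 0 < q := by lia
    have : 0 < m := by lia
    positivity
  zify at *
  obtain ⟨j, hj⟩ : ∃ j : ℤ, j = d₂ - d₁ := ⟨_, rfl⟩
  obtain ⟨w, hw⟩ : ∃ w : ℤ, w = 2 * d₂ - q * j := ⟨_, rfl⟩
  have hmw : (m : ℤ) * w = 2 * d₂ := by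
    have hprod : (h : ℤ) * (m * w - 2 * d₂) = 0 := by
      rw [hw, hj]
      linear_combination (-2 * d₁ * d₂ * q * m : ℤ) * hsum + (d₂ * q * m : ℤ) * hT₁ +
        (d₁ * q * m : ℤ) * hT₂ + (2 * d₂ * m : ℤ) * hT₃ - (2 * d₂ : ℤ) * hh
    linarith [(mul_eq_zero.1 hprod).resolve_left hpos.ne']
  have hw0 : 0 < w := pos_of_mul_pos_right (by lia : 0 < (m : ℤ) * w) (by lia)
  have hwj : w ≤ j := by
    have hqj : w * (m - 1) = q * j := by linear_combination hmw - hw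
    nlinarith [hqj]
  have hd : 2 * (d₁ : ℤ) = w + (q - 2) * j := by linear_combination 2 * hj - hw
  have hj2 : j ≤ 2 := by nlinarith
  obtain rfl | rfl : j = 1 ∨ j = 2 := by lia
  all_goals lia

section ClassEquation

variable {F : Type*} [Field F] {H : Subgroup SL(2, F)} {g m u y₁ y₂ : SL(2, F)}

lemma apply_zero_zero_eq_of_trace_sq_eq_four (hg : g ∈ upperTriangular F)
    (h4 : g.1.trace ^ 2 = 4) : g 0 0 = g 1 1 := by
  have hdet := det_entries_eq_one g
  rw [mem_upperTriangular_iff] at hg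
  rw [trace_fin_two] at h4
  exact sub_eq_zero.1 (pow_eq_zero_iff two_ne_zero |>.1 (by
    linear_combination h4 - 4 * hdet - 4 * g 0 1 * hg))

lemma exists_center_mul_mem_upperUnipotent (hg : g ∈ upperTriangular F) (h4 : g.1.trace ^ 2 = 4) :
    ∃ z ∈ center SL(2, F), z * g ∈ upperUnipotent F := by
  have hdet := det_entries_eq_one g
  have heq := apply_zero_zero_eq_of_trace_sq_eq_four hg h4
  rw [mem_upperTriangular_iff] at hg
  have hsq : g 0 0 * g 0 0 = 1 := by rw [hg, ← heq] at hdet; simpa using hdet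
  obtain ⟨z, hz⟩ := exists_coe_eq_of_det_eq_one (a := g 0 0) (b := 0) (c := 0) (d := g 0 0)
    (by simpa using hsq)
  have entries : z 0 0 = g 0 0 ∧ z 0 1 = 0 ∧ z 1 0 = 0 ∧ z 1 1 = g 0 0 := by simp [hz]
  obtain ⟨h00, h01, h10, h11⟩ := entries
  refine ⟨z, mem_center_iff_entries.2 ⟨h01, h10, h00.trans h11.symm⟩, ?_⟩
  simp [mem_upperUnipotent_iff, mul_apply, h00, h01, h10, h11, hg, hsq]

namespace IsMixedSubgroup

variable [Finite F]

lemma exists_mem_upperUnipotent (hH : IsMixedSubgroup H y₁ y₂) :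
    ∃ u ∈ H ⊓ upperUnipotent F, u ≠ 1 := by
  obtain ⟨m, hm, hmZ, hm4⟩ := hH.exists_trace_sq_eq_four
  obtain ⟨x, hx, hxm⟩ := hH.exists_conj_mem_upperTriangular hm hmZ hm4
  obtain ⟨z, hz, hzu⟩ := exists_center_mul_mem_upperUnipotent hxm (by rwa [trace_coe_conj])
  refine ⟨z * (x * m * x⁻¹), mem_inf.2 ⟨?_, hzu⟩, fun h ↦ hmZ ?_⟩
  · exact mul_mem (hH.center_le hz) (mul_mem (mul_mem hx hm) (inv_mem hx))
  · rw [← conj_mem_center_iff x, eq_inv_of_mul_eq_one_right h]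
    exact inv_mem hz

lemma mem_class_of_trace_sq_eq_four (hH : IsMixedSubgroup H y₁ y₂)
    (hu : u ∈ upperUnipotent F) (hu1 : u ≠ 1) (hm : m ∈ H) (hmZ : m ∉ center SL(2, F))
    (hm4 : m.1.trace ^ 2 = 4) : m ∈ centralizerClass H u := by
  obtain ⟨x, hx, hxm⟩ := hH.exists_conj_mem_upperTriangular hm hmZ hm4
  exact ⟨hm, hmZ, x, hx, (commute_iff_of_mem_upperUnipotent hu hu1).2
    ⟨hxm, apply_zero_zero_eq_of_trace_sq_eq_four hxm (by rwa [trace_coe_conj])⟩⟩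

lemma ncard_classes_add_card_center (hH : IsMixedSubgroup H y₁ y₂)
    (hu : u ∈ H ⊓ upperUnipotent F) (hu1 : u ≠ 1) :
    (centralizerClass H y₁).ncard + (centralizerClass H y₂).ncard + (centralizerClass H u).ncard +
      Nat.card (center SL(2, F)) = Nat.card H := by
  have huZ := notMem_center_of_mem_upperUnipotent hu.2 hu1
  have hu4 : u.1.trace ^ 2 = 4 := by
    rw [coe_eq_of_mem_upperUnipotent hu.2, trace_fin_two]
    norm_num
  obtain ⟨hu₁, hu₂⟩ := hH.notMem_classes_of_trace_sq_eq_four hu4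
  have hdisj : Disjoint (centralizerClass H y₁ ∪ centralizerClass H y₂) (centralizerClass H u) :=
    (disjoint_centralizerClass hu.1 huZ hu₁).union_left (disjoint_centralizerClass hu.1 huZ hu₂)
  have hunion : centralizerClass H y₁ ∪ centralizerClass H y₂ ∪ centralizerClass H u =
      (H : Set SL(2, F)) \ center SL(2, F) := by
    refine subset_antisymm (Set.union_subset (Set.union_subset centralizerClass_subset
      centralizerClass_subset) centralizerClass_subset) fun k hk ↦ ?_
    by_cases hk4 : k.1.trace ^ 2 = 4
    · exact Or.inr (hH.mem_class_of_trace_sq_eq_four hu.2 hu1 hk.1 hk.2 hk4)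
    · exact Or.inl (hH.mem_class_left_or_right hk.1 hk4)
  rw [← hH.ncard_sdiff_center_add_card_center, ← hunion, Set.ncard_union_eq hdisj,
    hH.ncard_union_classes]

lemma center_relIndex_centralizerIn_solutions (hH : IsMixedSubgroup H y₁ y₂)
    (hu : u ∈ H ⊓ upperUnipotent F) (hu1 : u ≠ 1) :
    let d₁ := (center SL(2, F)).relIndex (centralizerIn H y₁)
    let d₂ := (center SL(2, F)).relIndex (centralizerIn H y₂)
    let q := Nat.card ↥(H ⊓ upperUnipotent F)
    d₁ + 1 = q ∧ d₂ = q + 1 ∨ 2 * d₁ + 1 = q ∧ 2 * d₂ = q + 1 := by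
  intro d₁ d₂ q
  have hy₁Z := hH.notMem_center_left
  have hT₁ := ncard_centralizerClass_mul_relIndex hH.center_le hy₁Z
  have hT₂ := ncard_centralizerClass_mul_relIndex hH.center_le hH.notMem_center_right
  have hT₃ := ncard_centralizerClass_mul_relIndex hH.center_le
    (notMem_center_of_mem_upperUnipotent hu.2 hu1)
  rw [hH.relIndex_normalizerIn_eq_two.1.1] at hT₁
  rw [hH.relIndex_normalizerIn_eq_two.2] at hT₂
  rw [centralizerIn_relIndex_normalizerIn_of_mem_upperUnipotent hH.center_le hu hu1 hH.mem_left
    hy₁Z hH.left_zero_one hH.left_one_zero,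
    center_relIndex_centralizerIn_of_mem_upperUnipotent hH.center_le hu.2 hu1] at hT₃
  have hcard : Nat.card H = Nat.card (center SL(2, F)) * d₁ * q *
      (H ⊓ upperTriangular F).relIndex H := by
    rw [card_mul_relIndex (center_le_centralizerIn hH.center_le), mul_comm (Nat.card _) q,
      ← card_inf_upperTriangular hH.mem_left hy₁Z hH.left_zero_one hH.left_one_zero,
      card_mul_relIndex inf_le_left]
  exact class_equation_solutions hT₁ hT₂ hT₃ (hH.ncard_classes_add_card_center hu hu1) hcard
    Nat.card_pos
    (card_inf_upperUnipotent_add_one_le_relIndex hH.mem_right hH.right_one_zero_ne_zero)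
    (center_relIndex_centralizerIn_add_one_le_card hy₁Z hH.left_zero_one hH.left_one_zero
      hH.center_le hu hu1)
    (four_le_center_relIndex_centralizerIn hH.mem_left hH.admissible_left)
    (Nat.pos_of_ne_zero index_ne_zero_of_finite)

lemma pow_mem_center (hH : IsMixedSubgroup H y₁ y₂) :
    y₁ ^ (Nat.card ↥(H ⊓ upperUnipotent F) - 1) ∈ center SL(2, F) ∧
      y₂ ^ (Nat.card ↥(H ⊓ upperUnipotent F) + 1) ∈ center SL(2, F) := by
  obtain ⟨u, hu, hu1⟩ := hH.exists_mem_upperUnipotent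
  have pow_mem_of_dvd {y : SL(2, F)} {n : ℕ} (hy : y ∈ H)
      (h : (center SL(2, F)).relIndex (centralizerIn H y) ∣ n) : y ^ n ∈ center SL(2, F) := by
    obtain ⟨k, rfl⟩ := h
    rw [pow_mul]
    exact pow_mem (pow_relIndex_mem _ (mem_centralizerIn_iff.2 ⟨hy, rfl⟩)) k
  rcases hH.center_relIndex_centralizerIn_solutions hu hu1 with ⟨h₁, h₂⟩ | ⟨h₁, h₂⟩
  · exact ⟨pow_mem_of_dvd hH.mem_left ⟨1, by lia⟩, pow_mem_of_dvd hH.mem_right ⟨1, by lia⟩⟩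
  · exact ⟨pow_mem_of_dvd hH.mem_left ⟨2, by lia⟩, pow_mem_of_dvd hH.mem_right ⟨2, by lia⟩⟩

end IsMixedSubgroup

end ClassEquation

section Generic

variable {F : Type*} [Field F] {H : Subgroup SL(2, F)} {y y₁ y₂ : SL(2, F)} {t : F}

/-- No proper subfield contains the square of the trace `t`. The square is the invariant
of a matrix that survives in the projective group. -/
def IsGenericTrace (t : F) : Prop := ∀ K : Subfield F, t ^ 2 ∈ K → K = ⊤

lemma ncard_pow_eq_self_le {q : ℕ} (hq : 1 < q) : {x : F | x ^ q = x}.ncard ≤ q := by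
  classical
  open Polynomial in
  have hsub : {x : F | x ^ q = x} ⊆ (X ^ q - X : F[X]).roots.toFinset := fun x hx ↦ by
    simpa [FiniteField.X_pow_card_sub_X_ne_zero F hq, sub_eq_zero] using hx
  refine (Set.ncard_le_ncard hsub).trans ?_
  rw [Set.ncard_coe_finset]
  exact (Multiset.toFinset_card_le _).trans
    ((Polynomial.card_roots' _).trans_eq (FiniteField.X_pow_card_sub_X_natDegree_eq F hq))

lemma IsGenericTrace.card_le {p n : ℕ} [Fact p.Prime] [CharP F p] (ht : IsGenericTrace t)
    (hn : n ≠ 0) (h : (t ^ 2) ^ p ^ n = t ^ 2) : Nat.card F ≤ p ^ n := by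
  have htop := ht ((iterateFrobenius F p n).eqLocusField (RingHom.id F)) h
  have hfix : {x : F | x ^ p ^ n = x} = Set.univ :=
    Set.eq_univ_of_forall fun x ↦ show x ∈ (iterateFrobenius F p n).eqLocusField (RingHom.id F) by
      rw [htop]
      trivial
  rw [← Set.ncard_univ, ← hfix]
  exact ncard_pow_eq_self_le (Nat.one_lt_pow hn (Fact.out : p.Prime).one_lt)

lemma trace_sq_pow_char_pow_of_pow_mem_center {p n : ℕ} [Fact p.Prime] [CharP F p]
    (h : y ^ (p ^ n - 1) ∈ center SL(2, F) ∨ y ^ (p ^ n + 1) ∈ center SL(2, F)) :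
    (y.1.trace ^ 2) ^ p ^ n = y.1.trace ^ 2 := by
  rw [← pow_mul, mul_comm, pow_mul, ← trace_pow_char_pow]
  rcases h with h | h
  · rw [← pow_sub_one_mul (pow_ne_zero n (Fact.out : p.Prime).ne_zero) y, trace_center_mul_sq h]
  · rw [← mul_inv_cancel_right (y ^ p ^ n) y, ← pow_succ, trace_center_mul_sq h, trace_coe_inv]

variable [Finite F]

namespace IsMixedSubgroup

lemma eq_top (hH : IsMixedSubgroup H y₁ y₂)
    (hgen : IsGenericTrace y₁.1.trace ∨ IsGenericTrace y₂.1.trace) : H = ⊤ := by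
  refine eq_top_of_card_inf_upperUnipotent ?_ hH.mem_right hH.right_one_zero_ne_zero
  refine (card_upperUnipotent (F := F) ▸ card_le_of_le inf_le_right).antisymm ?_
  have hpow := hH.pow_mem_center
  have : Fintype F := Fintype.ofFinite F
  obtain ⟨p, hchar⟩ := CharP.exists F
  obtain ⟨N, hp, hN⟩ := FiniteField.card F p
  have : Fact p.Prime := ⟨hp⟩
  have hdvd : Nat.card ↥(H ⊓ upperUnipotent F) ∣ p ^ (N : ℕ) := by
    rw [← hN, ← Nat.card_eq_fintype_card, ← card_upperUnipotent (F := F)]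
    exact card_dvd_of_le inf_le_right
  obtain ⟨n, -, hn⟩ := (Nat.dvd_prime_pow hp).1 hdvd
  have hn0 : n ≠ 0 := by
    rintro rfl
    obtain ⟨u, hu, hu1⟩ := hH.exists_mem_upperUnipotent
    rw [card_eq_one.1 hn] at hu
    exact hu1 (mem_bot.1 hu)
  rw [hn] at hpow ⊢
  rcases hgen with h | h
  · exact h.card_le hn0 (trace_sq_pow_char_pow_of_pow_mem_center (.inl hpow.1))
  · exact h.card_le hn0 (trace_sq_pow_char_pow_of_pow_mem_center (.inr hpow.2))

end IsMixedSubgroup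

theorem eq_top_of_isSplitTrace_of_not_isSplitTrace (hH : center SL(2, F) ≤ H) (hy₁ : y₁ ∈ H)
    (hy₂ : y₂ ∈ H) (h₁ : IsAdmissibleTrace y₁.1.trace) (h₂ : IsAdmissibleTrace y₂.1.trace)
    (hs₁ : IsSplitTrace y₁.1.trace) (hs₂ : ¬ IsSplitTrace y₂.1.trace)
    (hgen : IsGenericTrace y₁.1.trace ∨ IsGenericTrace y₂.1.trace) : H = ⊤ := by
  obtain ⟨x, h01, h10⟩ := hs₁.exists_conj_diagonal h₁.2.2
  have hmixed : IsMixedSubgroup (H.map (MulAut.conj x).toMonoidHom) (x * y₁ * x⁻¹)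
      (x * y₂ * x⁻¹) := by
    refine ⟨fun z hz ↦ ⟨z, hH hz, ?_⟩, ⟨y₁, hy₁, rfl⟩, ⟨y₂, hy₂, rfl⟩, h01, h10, ?_, ?_, ?_⟩
    · exact mul_inv_eq_iff_eq_mul.2 (mem_center_iff.1 hz x)
    all_goals rwa [trace_coe_conj]
  have htop := hmixed.eq_top (by rwa [trace_coe_conj, trace_coe_conj])
  have hsurj : Function.Surjective (MulAut.conj x).toMonoidHom := (MulAut.conj x).surjective
  exact Subgroup.map_injective (f := (MulAut.conj x).toMonoidHom) (MulAut.conj x).injective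
    (htop.trans (map_top_of_surjective _ hsurj).symm)

end Generic

section TraceCounting

variable {F : Type*} [Field F] {t : F}

lemma isSplitTrace_iff_exists_unit : IsSplitTrace t ↔ ∃ a : Fˣ, (a + a⁻¹ : F) = t := by
  constructor
  · rintro ⟨a, b, hab, rfl⟩
    exact ⟨Units.mkOfMulEqOne a b hab, by simp [eq_inv_of_mul_eq_one_right hab]⟩
  · rintro ⟨a, rfl⟩
    exact ⟨a, (a⁻¹ : Fˣ), a.mul_inv, rfl⟩

lemma add_inv_eq_add_inv_iff {a b : Fˣ} : (b + b⁻¹ : F) = a + a⁻¹ ↔ b = a ∨ b = a⁻¹ := by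
  have hfactor : (b + b⁻¹ : F) - (a + a⁻¹) = (b - a) * (b - a⁻¹) * b⁻¹ := by
    simp only [Units.val_inv_eq_inv_val]
    field_simp
    ring
  rw [← sub_eq_zero, hfactor, mul_eq_zero, mul_eq_zero, or_iff_left (b⁻¹).ne_zero,
    sub_eq_zero, sub_eq_zero, Units.ext_iff, Units.ext_iff]

variable [Finite F]

lemma card_le_two_mul_ncard_isSplitTrace :
    Nat.card F ≤ 2 * {t : F | IsSplitTrace t}.ncard + 1 := by
  classical
  have : Fintype F := Fintype.ofFinite F
  have hfiber : ∀ t ∈ {t : F | IsSplitTrace t}.toFinset,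
      (Finset.univ.filter fun a : Fˣ ↦ (a + a⁻¹ : F) = t).card ≤ 2 := by
    intro t ht
    obtain ⟨a, rfl⟩ := isSplitTrace_iff_exists_unit.1 (by simpa using ht)
    refine (Finset.card_le_card (t := {a, a⁻¹}) fun b hb ↦ ?_).trans Finset.card_le_two
    simpa using add_inv_eq_add_inv_iff.1 (Finset.mem_filter.1 hb).2
  have hmaps : ∀ a ∈ (Finset.univ : Finset Fˣ), (a + a⁻¹ : F) ∈ {t | IsSplitTrace t}.toFinset :=
    fun a _ ↦ by simpa using isSplitTrace_iff_exists_unit.2 ⟨a, rfl⟩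
  have hle := Finset.card_le_mul_card_image_of_maps_to hmaps 2 hfiber
  rw [Finset.card_univ, ← Nat.card_eq_fintype_card, Nat.card_units,
    ← Set.ncard_eq_toFinset_card'] at hle
  lia

lemma two_mul_ncard_isSplitTrace_le :
    2 * {t : F | IsSplitTrace t ∧ t ^ 2 ≠ 4}.ncard + 1 ≤ Nat.card F := by
  classical
  have : Fintype F := Fintype.ofFinite F
  let T : Finset F := {t : F | IsSplitTrace t ∧ t ^ 2 ≠ 4}.toFinset
  let s : Finset Fˣ := Finset.univ.filter fun a : Fˣ ↦ (a + a⁻¹ : F) ∈ T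
  have hfiber : ∀ t ∈ T, 2 ≤ (s.filter fun a : Fˣ ↦ (a + a⁻¹ : F) = t).card := by
    intro t ht
    obtain ⟨hs, h4⟩ := Set.mem_toFinset.1 ht
    obtain ⟨a, rfl⟩ := isSplitTrace_iff_exists_unit.1 hs
    have hne : a ≠ a⁻¹ := fun h ↦ h4 (by
      have hinv := a.mul_inv
      rw [← h] at hinv ⊢
      linear_combination 4 * hinv)
    rw [← Finset.card_pair hne]
    refine Finset.card_le_card fun b hb ↦ ?_
    have hb' : (b + b⁻¹ : F) = a + a⁻¹ := add_inv_eq_add_inv_iff.2 (by simpa using hb)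
    exact Finset.mem_filter.2 ⟨Finset.mem_filter.2 ⟨Finset.mem_univ b, hb' ▸ ht⟩, hb'⟩
  have hle := (Finset.mul_card_image_le_card_of_maps_to
    (fun a ha ↦ (Finset.mem_filter.1 ha).2) 2 hfiber).trans s.card_le_univ
  rw [← Nat.card_eq_fintype_card, Nat.card_units, ← Set.ncard_eq_toFinset_card'] at hle
  have := Nat.card_pos (α := F)
  lia

lemma ncard_pow_mem_le {n : ℕ} (hn : 0 < n) (S : Set F) :
    {t : F | t ^ n ∈ S}.ncard ≤ n * S.ncard := by
  classical
  have : Fintype F := Fintype.ofFinite F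
  have hfiber : ∀ c ∈ S.toFinset,
      ({t : F | t ^ n ∈ S}.toFinset.filter fun t ↦ t ^ n = c).card ≤ n := by
    intro c _
    have hsub : ({t : F | t ^ n ∈ S}.toFinset.filter fun t ↦ t ^ n = c) ⊆
        (Polynomial.nthRoots n c).toFinset :=
      fun t ht ↦ by simpa [Polynomial.mem_nthRoots hn] using (Finset.mem_filter.1 ht).2
    exact (Finset.card_le_card hsub).trans
      ((Multiset.toFinset_card_le _).trans (Polynomial.card_nthRoots n c))
  have hmaps : ∀ t ∈ {t : F | t ^ n ∈ S}.toFinset, t ^ n ∈ S.toFinset := by simp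
  have hle := Finset.card_le_mul_card_image_of_maps_to hmaps n hfiber
  rwa [← Set.ncard_eq_toFinset_card', ← Set.ncard_eq_toFinset_card'] at hle

lemma ncard_le_ncard_admissible_add_six (S : Set F) :
    S.ncard ≤ {t ∈ S | IsAdmissibleTrace t}.ncard + 6 := by
  have hsub : S ⊆ {t ∈ S | IsAdmissibleTrace t} ∪ {t | t ^ 2 ∈ ({0, 1, 4} : Set F)} := fun t ht ↦ by
    by_cases h : IsAdmissibleTrace t
    · exact Or.inl ⟨ht, h⟩
    · refine Or.inr ?_
      simp only [IsAdmissibleTrace, Set.mem_ofPred_eq, Set.mem_insert_iff,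
        Set.mem_singleton_iff] at h ⊢
      tauto
  have hexcluded := ncard_pow_mem_le two_pos ({0, 1, 4} : Set F)
  have hthree : ({0, 1, 4} : Set F).ncard ≤ 3 :=
    (Set.ncard_insert_le _ _).trans (Nat.succ_le_succ ((Set.ncard_insert_le _ _).trans_eq
      (by rw [Set.ncard_singleton])))
  have := (Set.ncard_le_ncard hsub).trans (Set.ncard_union_le _ _)
  lia

lemma card_le_two_mul_ncard_split_admissible :
    Nat.card F ≤ 2 * {t : F | IsSplitTrace t ∧ IsAdmissibleTrace t}.ncard + 13 := by
  have hsplit := card_le_two_mul_ncard_isSplitTrace (F := F)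
  have hadm := ncard_le_ncard_admissible_add_six {t : F | IsSplitTrace t}
  simp only [Set.mem_ofPred_eq] at hadm
  lia

lemma card_le_two_mul_ncard_not_split_admissible :
    Nat.card F ≤ 2 * {t : F | ¬ IsSplitTrace t ∧ IsAdmissibleTrace t}.ncard + 13 := by
  have hsplit := two_mul_ncard_isSplitTrace_le (F := F)
  have hadm := ncard_le_ncard_admissible_add_six (Set.univ : Set F)
  have hsub : {t ∈ (Set.univ : Set F) | IsAdmissibleTrace t} ⊆
      {t : F | IsSplitTrace t ∧ t ^ 2 ≠ 4} ∪ {t : F | ¬ IsSplitTrace t ∧ IsAdmissibleTrace t} :=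
    fun t ht ↦ (em (IsSplitTrace t)).imp (fun h ↦ ⟨h, ht.2.2.2⟩) (fun h ↦ ⟨h, ht.2⟩)
  have hle := (Set.ncard_le_ncard hsub).trans (Set.ncard_union_le _ _)
  rw [Set.ncard_univ] at hadm
  lia

lemma sum_Icc_pow_le {p : ℕ} (hp : 2 ≤ p) (k : ℕ) : ∑ d ∈ Finset.Icc 1 k, p ^ d ≤ 2 * p ^ k := by
  induction k with
  | zero => simp
  | succ k ih =>
    rw [Finset.sum_Icc_succ_top (by lia), pow_succ]
    have := Nat.mul_le_mul_left (p ^ k) hp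
    lia

lemma card_sq_le_of_ne_top {K : Subfield F} (hK : K ≠ ⊤) : Nat.card K ^ 2 ≤ Nat.card F := by
  have hne : Module.finrank K F ≠ 1 := fun h ↦ by
    refine hK (SetLike.coe_injective (Set.eq_of_subset_of_ncard_le (Set.subset_univ _) ?_))
    rw [Subfield.coe_top, Set.ncard_univ, Module.natCard_eq_pow_finrank (K := K), h, pow_one]
    rfl
  have hpos : 0 < Module.finrank K F := Module.finrank_pos
  rw [Module.natCard_eq_pow_finrank (K := K) (V := F)]
  exact Nat.pow_le_pow_right Nat.card_pos (by lia)

lemma exists_ncard_not_isGenericTrace_le :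
    ∃ s : ℕ, s ^ 2 ≤ Nat.card F ∧ {t : F | ¬ IsGenericTrace t}.ncard ≤ 4 * s := by
  have : Fintype F := Fintype.ofFinite F
  obtain ⟨p, hchar⟩ := CharP.exists F
  obtain ⟨n, hp, hn⟩ := FiniteField.card F p
  rw [← Nat.card_eq_fintype_card] at hn
  have : Fact p.Prime := ⟨hp⟩
  refine ⟨p ^ ((n : ℕ) / 2), ?_, ?_⟩
  · rw [hn, ← pow_mul]
    exact Nat.pow_le_pow_right hp.pos (Nat.div_mul_le_self _ 2)
  have hsub : {t : F | ¬ IsGenericTrace t} ⊆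
      {t : F | t ^ 2 ∈ ⋃ d ∈ Finset.Icc 1 ((n : ℕ) / 2), {x : F | x ^ p ^ d = x}} := by
    intro t ht
    simp only [IsGenericTrace, not_forall] at ht
    obtain ⟨K, htK, hK⟩ := ht
    have : Fintype K := Fintype.ofFinite K
    obtain ⟨d, -, hd⟩ := FiniteField.card K p
    have hle := card_sq_le_of_ne_top hK
    rw [Nat.card_eq_fintype_card, hd, hn, ← pow_mul, Nat.pow_le_pow_iff_right hp.one_lt] at hle
    have hfix : (t ^ 2) ^ p ^ (d : ℕ) = t ^ 2 := by
      rw [← hd]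
      exact congrArg Subtype.val (FiniteField.pow_card (⟨t ^ 2, htK⟩ : K))
    exact Set.mem_biUnion (Finset.mem_coe.2 (Finset.mem_Icc.2 ⟨d.pos, by lia⟩)) hfix
  have hunion : (⋃ d ∈ Finset.Icc 1 ((n : ℕ) / 2), {x : F | x ^ p ^ d = x}).ncard ≤
      2 * p ^ ((n : ℕ) / 2) := by
    refine (Finset.set_ncard_biUnion_le _ _).trans
      ((Finset.sum_le_sum fun d hd ↦ ?_).trans (sum_Icc_pow_le hp.two_le _))
    have hd : 1 ≤ d := (Finset.mem_Icc.1 hd).1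
    exact ncard_pow_eq_self_le (Nat.one_lt_pow (by lia) hp.one_lt)
  have := (Set.ncard_le_ncard hsub).trans (ncard_pow_mem_le two_pos _)
  lia

end TraceCounting

section ProjectiveSpecialLinear

variable {F : Type*} [Field F] [Finite F] {g k : SL(2, F)}

lemma card_specialLinearGroup_two :
    Nat.card SL(2, F) = (Nat.card F - 1) * Nat.card F * (Nat.card F + 1) := by
  have : Fintype F := Fintype.ofFinite F
  have hker : Nat.card (GeneralLinearGroup.det : GL (Fin 2) F →* Fˣ).ker = Nat.card SL(2, F) := by
    rw [Nat.card_congr (Equiv.ofInjective (Matrix.SpecialLinearGroup.toGL : SL(2, F) → GL (Fin 2) F)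
      Matrix.SpecialLinearGroup.toGL_injective), Matrix.SpecialLinearGroup.range_toGL]
    rfl
  have hindex : (GeneralLinearGroup.det : GL (Fin 2) F →* Fˣ).ker.index = Nat.card F - 1 := by
    rw [index_ker, MonoidHom.range_eq_top.2 GeneralLinearGroup.det_surjective, card_top,
      Nat.card_units]
  have hGL := (GeneralLinearGroup.det : GL (Fin 2) F →* Fˣ).ker.card_mul_index
  rw [hker, hindex, card_GL_field, Fin.prod_univ_two, ← Nat.card_eq_fintype_card] at hGL
  obtain ⟨q, hq⟩ : ∃ q, Nat.card F = q + 2 := ⟨Nat.card F - 2, by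
    have := Finite.one_lt_card (α := F)
    lia⟩
  rw [hq] at hGL ⊢
  refine Nat.eq_of_mul_eq_mul_right (by lia : 0 < q + 2 - 1) (hGL.trans ?_)
  have hsq_sub_one : (q + 2) ^ 2 - (q + 2) ^ 0 = (q + 1) * (q + 3) := by
    rw [pow_zero]
    exact Nat.sub_eq_of_eq_add (by ring)
  have hsq_sub_self : (q + 2) ^ 2 - (q + 2) ^ 1 = (q + 1) * (q + 2) :=
    Nat.sub_eq_of_eq_add (by ring)
  have hpred : q + 2 - 1 = q + 1 := rfl
  rw [Fin.val_zero, Fin.val_one, hsq_sub_one, hsq_sub_self, hpred]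
  ring

lemma ncard_mul_le_ncard_trace_mem (T : Set F) :
    T.ncard * (Nat.card F * (Nat.card F - 1)) ≤ {g : SL(2, F) | g.1.trace ∈ T}.ncard := by
  have hex (t a : F) (b : Fˣ) : ∃ g : SL(2, F), g 0 0 = a ∧ g 0 1 = b ∧ g.1.trace = t := by
    obtain ⟨g, hg⟩ := exists_coe_eq_of_det_eq_one
      (a := a) (b := b) (c := (a * (t - a) - 1) / b) (d := t - a) (by field_simp; ring)
    exact ⟨g, by simp [hg], by simp [hg], by simp [hg, trace_fin_two]⟩
  choose f hf₀ hf₁ hf_trace using hex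
  have hinj : Function.Injective fun p : T × F × Fˣ ↦
      (⟨f p.1 p.2.1 p.2.2, by simp [hf_trace]⟩ : {g : SL(2, F) | g.1.trace ∈ T}) := by
    rintro ⟨t, a, b⟩ ⟨t', a', b'⟩ h
    have h := congrArg Subtype.val h
    have h₀ := congrArg (fun g : SL(2, F) ↦ g 0 0) h
    have h₁ := congrArg (fun g : SL(2, F) ↦ g 0 1) h
    have ht := congrArg (fun g : SL(2, F) ↦ g.1.trace) h
    simp only [hf₀, hf₁, hf_trace, Subtype.coe_inj, Units.val_inj] at h₀ h₁ ht
    rw [h₀, h₁, ht]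
  have hle := Nat.card_le_card_of_injective _ hinj
  rwa [Nat.card_prod, Nat.card_prod, Nat.card_units] at hle

lemma ncard_mul_card_le_of_trace_mem {A : Set (PSL2 F)} {T : Set F}
    (h : ∀ g : SL(2, F), g.1.trace ∈ T → (g : PSL2 F) ∈ A) :
    T.ncard * Nat.card (PSL2 F) ≤ (Nat.card F + 1) * A.ncard := by
  have hA : {g : SL(2, F) | g.1.trace ∈ T}.ncard ≤ Nat.card (center SL(2, F)) * A.ncard := by
    rw [← Nat.card_coe_set_eq A, ← Nat.card_prod,
      ← Nat.card_congr (QuotientGroup.preimageMkEquivSubgroupProdSet (center SL(2, F)) A)]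
    exact Set.ncard_le_ncard (t := QuotientGroup.mk ⁻¹' A) h
  have hcard := card_specialLinearGroup_two (F := F)
  rw [card_eq_card_quotient_mul_card_subgroup (center SL(2, F))] at hcard
  have hq := Finite.one_lt_card (α := F)
  have hpos : 0 < Nat.card (center SL(2, F)) * (Nat.card F * (Nat.card F - 1)) :=
    Nat.mul_pos Nat.card_pos (Nat.mul_pos (by lia) (by lia))
  refine Nat.le_of_mul_le_mul_left ?_ hpos
  calc Nat.card (center SL(2, F)) * (Nat.card F * (Nat.card F - 1)) *
        (T.ncard * Nat.card (PSL2 F))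
      = T.ncard * (Nat.card F * (Nat.card F - 1)) *
        (Nat.card (PSL2 F) * Nat.card (center SL(2, F))) := by ring
    _ ≤ Nat.card (center SL(2, F)) * A.ncard *
        ((Nat.card F - 1) * Nat.card F * (Nat.card F + 1)) :=
      Nat.mul_le_mul ((ncard_mul_le_ncard_trace_mem T).trans hA) hcard.le
    _ = _ := by ring

lemma invGen_of_isAdmissibleTrace (hg : IsAdmissibleTrace g.1.trace)
    (hk : IsAdmissibleTrace k.1.trace) (hgen : IsGenericTrace g.1.trace)
    (hsplit : IsSplitTrace g.1.trace ↔ ¬ IsSplitTrace k.1.trace) :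
    InvGen (g : PSL2 F) (k : PSL2 F) := by
  intro a b
  obtain ⟨a, rfl⟩ := QuotientGroup.mk_surjective a
  obtain ⟨b, rfl⟩ := QuotientGroup.mk_surjective b
  set K := closure {(a : PSL2 F) * g * (a : PSL2 F)⁻¹, (b : PSL2 F) * k * (b : PSL2 F)⁻¹}
  let H := K.comap (QuotientGroup.mk' (center SL(2, F)))
  have hZ : center SL(2, F) ≤ H := by
    rw [← QuotientGroup.ker_mk' (center SL(2, F))]
    exact MonoidHom.ker_le_comap _ _
  have hgH : a * g * a⁻¹ ∈ H := subset_closure (Or.inl rfl)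
  have hkH : b * k * b⁻¹ ∈ H := subset_closure (Or.inr rfl)
  rw [← trace_coe_conj a g] at hg hgen hsplit
  rw [← trace_coe_conj b k] at hk hsplit
  have htop : H = ⊤ := by
    by_cases hs : IsSplitTrace (a * g * a⁻¹).1.trace
    · exact eq_top_of_isSplitTrace_of_not_isSplitTrace hZ hgH hkH hg hk hs (hsplit.1 hs) (.inl hgen)
    · exact eq_top_of_isSplitTrace_of_not_isSplitTrace hZ hkH hgH hk hg (not_not.1 (mt hsplit.2 hs))
        hs (.inr hgen)
  rw [← map_comap_eq_self_of_surjective (QuotientGroup.mk'_surjective (center SL(2, F))) K]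
  exact (congrArg _ htop).trans (map_top_of_surjective _ (QuotientGroup.mk'_surjective _))

end ProjectiveSpecialLinear

section Density

variable {F : Type*} [Field F] [Finite F] {g : SL(2, F)} {A : Set (PSL2 F)} {T : Set F}

lemma mul_card_le_ncard_of_trace_mem {c : ℝ}
    (h : ∀ g : SL(2, F), g.1.trace ∈ T → (g : PSL2 F) ∈ A)
    (hc : (Nat.card F + 1) * c ≤ T.ncard) : c * Nat.card (PSL2 F) ≤ A.ncard := by
  refine le_of_mul_le_mul_left ?_ (by positivity : (0 : ℝ) < Nat.card F + 1)
  calc (Nat.card F + 1) * (c * Nat.card (PSL2 F))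
      = (Nat.card F + 1) * c * Nat.card (PSL2 F) := by ring
    _ ≤ T.ncard * Nat.card (PSL2 F) := by gcongr
    _ ≤ (Nat.card F + 1) * A.ncard := mod_cast ncard_mul_card_le_of_trace_mem h

lemma half_sub_mul_card_le_ncard_of_trace_mem
    (h : ∀ g : SL(2, F), g.1.trace ∈ T → (g : PSL2 F) ∈ A)
    (hT : Nat.card F ≤ 2 * T.ncard + 13) :
    (1 / 2 - 10 / Nat.card F : ℝ) * Nat.card (PSL2 F) ≤ A.ncard := by
  refine mul_card_le_ncard_of_trace_mem h ?_
  have hq : (0 : ℝ) < Nat.card F := mod_cast Nat.card_pos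
  have hT : (Nat.card F : ℝ) ≤ 2 * T.ncard + 13 := mod_cast hT
  calc (Nat.card F + 1) * (1 / 2 - 10 / Nat.card F : ℝ)
      = (Nat.card F - 19) / 2 - 10 / Nat.card F := by field_simp; ring
    _ ≤ (Nat.card F - 19) / 2 := sub_le_self _ (by positivity)
    _ ≤ T.ncard := by linarith

lemma one_sub_mul_card_le_ncard_of_trace_mem {s : ℕ}
    (h : ∀ g : SL(2, F), g.1.trace ∈ T → (g : PSL2 F) ∈ A)
    (hs : s ^ 2 ≤ Nat.card F) (hT : Nat.card F ≤ T.ncard + 6 + 4 * s) :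
    (1 - 10 * (Nat.card F : ℝ) ^ (-(1 : ℝ) / 2)) * Nat.card (PSL2 F) ≤ A.ncard := by
  refine mul_card_le_ncard_of_trace_mem h ?_
  have hq : (2 : ℝ) ≤ Nat.card F := mod_cast Finite.one_lt_card (α := F)
  have hT : (Nat.card F : ℝ) ≤ T.ncard + 6 + 4 * s := mod_cast hT
  have hs : (s : ℝ) ≤ √(Nat.card F) := Real.le_sqrt_of_sq_le (mod_cast hs)
  have hsqrt : (7 / 6 : ℝ) ≤ √(Nat.card F) := Real.le_sqrt_of_sq_le (by linarith)
  have hinv : (Nat.card F : ℝ) ^ (-(1 : ℝ) / 2) = (√(Nat.card F))⁻¹ := by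
    rw [Real.sqrt_eq_rpow, ← Real.rpow_neg (by linarith), neg_div]
  have hmul : (Nat.card F : ℝ) * (√(Nat.card F))⁻¹ = √(Nat.card F) := Real.div_sqrt
  have hpos : 0 ≤ (√(Nat.card F : ℝ))⁻¹ := by positivity
  rw [hinv]
  linarith

lemma exists_card_le_ncard_generic_admissible (F : Type*) [Field F] [Finite F] :
    ∃ s : ℕ, s ^ 2 ≤ Nat.card F ∧
      Nat.card F ≤ {t : F | IsGenericTrace t ∧ IsAdmissibleTrace t}.ncard + 6 + 4 * s := by
  obtain ⟨s, hs, hle⟩ := exists_ncard_not_isGenericTrace_le (F := F)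
  refine ⟨s, hs, ?_⟩
  have hcompl := Set.ncard_add_ncard_compl {t : F | IsGenericTrace t}
  have hadm := ncard_le_ncard_admissible_add_six {t : F | IsGenericTrace t}
  simp only [Set.compl_ofPred, Set.mem_ofPred_eq] at hcompl hadm
  lia

lemma half_sub_mul_card_le_ncard_invGen (hgen : IsGenericTrace g.1.trace)
    (hg : IsAdmissibleTrace g.1.trace) :
    (1 / 2 - 10 / Nat.card F : ℝ) * Nat.card (PSL2 F) ≤
      {z : PSL2 F | InvGen (g : PSL2 F) z}.ncard := by
  by_cases hs : IsSplitTrace g.1.trace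
  · exact half_sub_mul_card_le_ncard_of_trace_mem
      (fun k hk ↦ invGen_of_isAdmissibleTrace hg hk.2 hgen (iff_of_true hs hk.1))
      card_le_two_mul_ncard_not_split_admissible
  · exact half_sub_mul_card_le_ncard_of_trace_mem
      (fun k hk ↦ invGen_of_isAdmissibleTrace hg hk.2 hgen (iff_of_false hs (not_not_intro hk.1)))
      card_le_two_mul_ncard_split_admissible

end Density

theorem stmt_3 :
    ∃ C : ℝ, 0 < C ∧
      ∀ (F : Type) [Field F] [Fintype F],
        (Nat.card {y : PSL2 F //
            (Nat.card {z : PSL2 F // InvGen y z} : ℝ) ≥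
              (1 / 2 - C / Fintype.card F) * Nat.card (PSL2 F)} : ℝ) ≥
          (1 - C * (Fintype.card F : ℝ) ^ (-(1 : ℝ) / 2)) * Nat.card (PSL2 F) := by
  refine ⟨10, by norm_num, fun F _ _ ↦ ?_⟩
  rw [← Nat.card_eq_fintype_card]
  obtain ⟨s, hs, hcard⟩ := exists_card_le_ncard_generic_admissible F
  exact one_sub_mul_card_le_ncard_of_trace_mem
    (fun g hg ↦ half_sub_mul_card_le_ncard_invGen hg.1 hg.2) hs hcard
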